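/- Let 𝒪 ⊆ ℝ^d be open, T > 0, ρ > 0, and let 𝓗 : ℝ^d × ℝ^d × M_d(ℝ) → ℝ be continuous and nonincreasing in its third variable with respect to the Loewner order. Assume Assumption A.1: there exists α > 0 such that liminf_{η↓0}(𝓗(y,q,Y^η) − 𝓗(x,p,X^η)) ≤ α(|x−y|(1+|q|+n²|x−y|) + (1+|x|)|p−q| + (1+|x|²)|Q|) for all x,y ∈ cl(𝒪) with |x−y| ≤ 1, all p,q ∈ ℝ^d, Q ∈ M_{2d}(ℝ), all families (X^η,Y^η)_{η>0} of d×d matrices and all n ≥ 1 such that the block matrix diag(X^η, −Y^η) ≤ A_n + ηA_n² in the Loewner order for all η > 0, where A_n := n²[[I_d, −I_d],[−I_d, I_d]] + Q. Let w₁ : [0,T]×cl(𝒪) → ℝ be an upper semicontinuous viscosity subsolution on cl(𝒪) of ρφ − ∂_t φ + 𝓗(·, Dφ, D²φ) = 0, let w₂ : [0,T]×cl(𝒪) → ℝ be lower semicontinuous and a viscosity supersolution on 𝒪 of the same equation, suppose w₁ and w₂ have polynomial growth on [0,T]×cl(𝒪), and suppose w₂ is of class 𝓡(𝒪). If w₂(T,x)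 ≥ w₁(T,x) for all x ∈ cl(𝒪), then w₂ ≥ w₁ on all of [0,T]×cl(𝒪). -/

import Mathlib

open Set Filter Asymptotics

attribute [local instance] Matrix.normedAddCommGroup

noncomputable section

/-- Test functions for the parabolic equation: `φ` is continuously differentiable in `t` and
twice continuously differentiable in `x`, with time derivative `φt`, spatial gradient `Dφ`
and spatial Hessian matrix `D2φ`, all jointly continuous. -/
def IsC12 (d : ℕ) (φ φt : ℝ → EuclideanSpace ℝ (Fin d) → ℝ)
    (Dφ : ℝ → EuclideanSpace ℝ (Fin d) → EuclideanSpace ℝ (Fin d))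
    (D2φ : ℝ → EuclideanSpace ℝ (Fin d) → Matrix (Fin d) (Fin d) ℝ) : Prop :=
  (∀ t x, HasDerivAt (fun s => φ s x) (φt t x) t) ∧
  (∀ t x, HasGradientAt (fun y => φ t y) (Dφ t x) x) ∧
  (∀ t x, ∃ L2 : EuclideanSpace ℝ (Fin d) →L[ℝ] EuclideanSpace ℝ (Fin d),
    HasFDerivAt (fun y => Dφ t y) L2 x ∧
    ∀ (v : EuclideanSpace ℝ (Fin d)) (i : Fin d), L2 v i = ∑ j, D2φ t x i j * v j) ∧
  Continuous (fun z : ℝ × EuclideanSpace ℝ (Fin d) => φt z.1 z.2) ∧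
  Continuous (fun z : ℝ × EuclideanSpace ℝ (Fin d) => Dφ z.1 z.2) ∧
  Continuous (fun z : ℝ × EuclideanSpace ℝ (Fin d) => D2φ z.1 z.2)

/-- The matrix `A_n = n² [[I, −I], [−I, I]] + Q` appearing in Assumption A.1. -/
def An (d : ℕ) (n : ℝ) (Q : Matrix (Fin d ⊕ Fin d) (Fin d ⊕ Fin d) ℝ) :
    Matrix (Fin d ⊕ Fin d) (Fin d ⊕ Fin d) ℝ :=
  n ^ 2 • Matrix.fromBlocks (1 : Matrix (Fin d) (Fin d) ℝ) (-1) (-1) 1 + Q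

/-- **Assumption A.1** of the paper (structural condition on the operator `𝓗`); the Loewner
order `A ≤ B` is expressed as `(B − A).PosSemidef`, and the `liminf` is taken in the
extended reals. -/
def AssumptionA1 (d : ℕ) (𝒪 : Set (EuclideanSpace ℝ (Fin d)))
    (H : EuclideanSpace ℝ (Fin d) → EuclideanSpace ℝ (Fin d) →
      Matrix (Fin d) (Fin d) ℝ → ℝ) : Prop :=
  ∃ α > (0 : ℝ), ∀ x ∈ closure 𝒪, ∀ y ∈ closure 𝒪, ‖x - y‖ ≤ 1 →
    ∀ (p q : EuclideanSpace ℝ (Fin d)) (Q : Matrix (Fin d ⊕ Fin d) (Fin d ⊕ Fin d) ℝ)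
      (Xη Yη : ℝ → Matrix (Fin d) (Fin d) ℝ) (n : ℝ), 1 ≤ n →
      (∀ η > (0 : ℝ),
        (An d n Q + η • (An d n Q * An d n Q) -
          Matrix.fromBlocks (Xη η) 0 0 (-(Yη η))).PosSemidef) →
      liminf (fun η : ℝ => ((H y q (Yη η) - H x p (Xη η) : ℝ) : EReal))
          (nhdsWithin 0 (Ioi 0)) ≤
        ((α * (‖x - y‖ * (1 + ‖q‖ + n ^ 2 * ‖x - y‖) + (1 + ‖x‖) * ‖p - q‖ +
          (1 + ‖x‖ ^ 2) * ‖Q‖) : ℝ) : EReal)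

/-- A function `w : [0,T] × cl(𝒪) → ℝ` is of class `𝓡(𝒪)` (Definition A.1 / 4.6 of the
paper). -/
def ClassR (d : ℕ) (T : ℝ) (𝒪 : Set (EuclideanSpace ℝ (Fin d)))
    (w : ℝ → EuclideanSpace ℝ (Fin d) → ℝ) : Prop :=
  ∀ t ∈ Ico (0 : ℝ) T, ∀ x ∈ frontier 𝒪,
    ∃ r > (0 : ℝ), ∃ B : Set (EuclideanSpace ℝ (Fin d)), IsOpen B ∧ x ∈ B ∧
      ∃ ℓ : ℝ → EuclideanSpace ℝ (Fin d),
        -- (A.2): liminf_{ε→0} ε⁻¹ |ℓ(ε)| < ∞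
        (liminf (fun ε : ℝ => ENNReal.ofReal (ε⁻¹ * ‖ℓ ε‖)) (nhdsWithin 0 (Ioi 0)) < ⊤) ∧
        -- (A.3): y + ℓ(ε) + o(ε) ∈ 𝒪 for all y ∈ cl(𝒪) ∩ B and small ε > 0
        (∀ ψ : ℝ → EuclideanSpace ℝ (Fin d), ψ =o[nhdsWithin (0 : ℝ) (Ioi 0)] (fun ε => ε) →
          ∃ r' > (0 : ℝ), ∀ y ∈ closure 𝒪 ∩ B, ∀ ε ∈ Ioo (0 : ℝ) (min r r'),
            y + ℓ ε + ψ ε ∈ 𝒪) ∧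
        -- (A.4)–(A.5): continuity of `w` along the perturbation
        ∃ lam : ℝ → ℝ, (∀ ε > (0 : ℝ), 0 ≤ lam ε) ∧
          Tendsto lam (nhdsWithin 0 (Ioi 0)) (nhds 0) ∧
          Tendsto (fun ε => w (t + lam ε) (x + ℓ ε)) (nhdsWithin 0 (Ioi 0)) (nhds (w t x))

section JA
variable {Z : Type*} [NormedAddCommGroup Z] [InnerProductSpace ℝ Z]

/-- `q` is a (global) subgradient of `F` at `ζ`. -/
def SubG (F : Z → ℝ) (ζ q : Z) : Prop := ∀ ζ', F ζ + inner ℝ q (ζ' - ζ) ≤ F ζ'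

theorem ja_zero {d : Z} {c r : ℝ} (hr : 0 < r) (hc : 0 ≤ c)
    (h : ∀ k : Z, ‖k‖ ≤ r → inner ℝ d k ≤ c / 2 * ‖k‖ ^ 2) : d = 0 := by
  by_contra hd
  have hd' : 0 < ‖d‖ := norm_pos_iff.mpr hd
  have key : ∀ s : ℝ, 0 < s → s ≤ r → ‖d‖ ≤ c / 2 * s := by
    intro s hs hsr
    have := h ((s / ‖d‖) • d) (by
      rw [norm_smul, Real.norm_of_nonneg (by positivity)]; field_simp; exact hsr)
    rw [norm_smul, Real.norm_of_nonneg (by positivity), inner_smul_right,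
      real_inner_self_eq_norm_sq] at this
    field_simp at this
    nlinarith
  have h1 := key (min r (‖d‖ / (c + 1))) (by positivity) (min_le_left _ _)
  have h2 : c / 2 * min r (‖d‖ / (c + 1)) ≤ c / 2 * (‖d‖ / (c + 1)) :=
    mul_le_mul_of_nonneg_left (min_le_right _ _) (by positivity)
  have h3 : c / 2 * (‖d‖ / (c + 1)) < ‖d‖ := by
    rw [mul_div_assoc', div_lt_iff₀ (by positivity)]; nlinarith
  linarith

theorem ja_subgrad_close {F : Z → ℝ} {ζ q h q' : Z} {c r : ℝ} (hc : 0 ≤ c) (hr : 0 < r)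
    (hq : SubG F ζ q)
    (hF : ∀ k : Z, ‖k‖ ≤ r → F (ζ + k) ≤ F ζ + inner ℝ q k + c / 2 * ‖k‖ ^ 2)
    (hh : 2 * ‖h‖ ≤ r) (hq' : SubG F (ζ + h) q') : ‖q' - q‖ ≤ 2 * c * ‖h‖ := by
  have key : ∀ k : Z, ‖k‖ ≤ r → inner ℝ (q' - q) (k - h) ≤ c / 2 * ‖k‖ ^ 2 := by
    intro k hk
    have h1 := hF k hk
    have h2 := hq (ζ + h)
    have h3 := hq' (ζ + k)
    simp only [add_sub_cancel_left, add_sub_add_left_eq_sub] at h2 h3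
    simp only [inner_sub_left, inner_sub_right] at *
    linarith
  rcases eq_or_ne h 0 with rfl | hne
  · have : q' - q = 0 := ja_zero hr hc (by simpa using key)
    simp [this]
  · by_cases hd : q' - q = 0
    · rw [hd]; simp; positivity
    have hd' : 0 < ‖q' - q‖ := norm_pos_iff.mpr hd
    have hh' : 0 < ‖h‖ := norm_pos_iff.mpr hne
    have hn : ‖(2 * ‖h‖ / ‖q' - q‖) • (q' - q)‖ = 2 * ‖h‖ := by
      rw [norm_smul, Real.norm_of_nonneg (by positivity)]; field_simp
    have := key ((2 * ‖h‖ / ‖q' - q‖) • (q' - q)) (by rw [hn]; exact hh)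
    rw [hn, inner_sub_right, inner_smul_right, real_inner_self_eq_norm_sq] at this
    have h4 : inner ℝ (q' - q) h ≤ ‖q' - q‖ * ‖h‖ := real_inner_le_norm _ _
    have h5 : 2 * ‖h‖ / ‖q' - q‖ * ‖q' - q‖ ^ 2 = 2 * ‖h‖ * ‖q' - q‖ := by field_simp
    rw [h5] at this
    nlinarith

theorem ja_partition {g : ℝ → ℝ} {A B : ℝ}
    (h : ∀ t t', 0 ≤ t → t ≤ t' → t' ≤ 1 → |g t' - g t| ≤ (t' - t) * (A + (t' - t) * B)) :
    |g 1 - g 0| ≤ A := by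
  have key : ∀ N : ℕ, 0 < N → |g 1 - g 0| ≤ A + B / N := by
    intro N hN
    have hN' : (0:ℝ) < N := by exact_mod_cast hN
    have ind : ∀ i : ℕ, i ≤ N → |g (i / N) - g 0| ≤ (i / N) * (A + B / N) := by
      intro i
      induction i with
      | zero => intro _; simp
      | succ i ih =>
        intro hi
        have h1 := ih (by omega)
        have h2 := h (i / N) ((i + 1 : ℕ) / N) (by positivity) (by gcongr; omega)
          (by rw [div_le_one hN']; exact_mod_cast hi)
        have h3 : ((i + 1 : ℕ) / N : ℝ) - i / N = 1 / N := by push_cast; ring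
        rw [h3] at h2
        have h4 := abs_add_le (g ((i + 1 : ℕ) / N) - g (i / N)) (g (i / N) - g 0)
        rw [sub_add_sub_cancel] at h4
        have h5 : ((i + 1 : ℕ) / N : ℝ) * (A + B / N) =
          1 / N * (A + 1 / N * B) + i / N * (A + B / N) := by push_cast; ring
        rw [h5]; linarith
    have := ind N le_rfl
    rw [div_self hN'.ne'] at this
    linarith
  have lim : Tendsto (fun N : ℕ => A + B / N) atTop (nhds (A + 0)) :=
    tendsto_const_nhds.add (tendsto_const_div_atTop_nhds_zero_nat B)
  rw [add_zero] at lim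
  exact ge_of_tendsto lim (by filter_upwards [eventually_gt_atTop 0] with N hN using key N hN)

theorem ja_expand {F : Z → ℝ} {ζ q h : Z} {M : Z →L[ℝ] Z} {e : ℝ} (he : 0 ≤ e)
    (hex : ∀ ζ, ∃ q, SubG F ζ q)
    (H : ∀ k : Z, ‖k‖ ≤ ‖h‖ → ∀ q', SubG F (ζ + k) q' → ‖q' - q - M k‖ ≤ e * ‖k‖) :
    |F (ζ + h) - F ζ - inner ℝ q h - 1 / 2 * inner ℝ (M h) h| ≤ e * ‖h‖ ^ 2 := by
  choose Q hQ using fun t : ℝ => hex (ζ + t • h)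
  set g : ℝ → ℝ := fun t => F (ζ + t • h) - t * inner ℝ q h - t ^ 2 / 2 * inner ℝ (M h) h with hg
  have hQb : ∀ t, 0 ≤ t → t ≤ 1 →
      |inner ℝ (Q t) h - inner ℝ q h - t * inner ℝ (M h) h| ≤ e * ‖h‖ ^ 2 := by
    intro t h0 h1
    have hn : ‖t • h‖ ≤ ‖h‖ := by
      rw [norm_smul, Real.norm_of_nonneg h0]; nlinarith [norm_nonneg h]
    have h2 := H (t • h) hn (Q t) (hQ t)
    have h3 : inner ℝ (Q t) h - inner ℝ q h - t * inner ℝ (M h) h =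
        inner ℝ (Q t - q - M (t • h)) h := by
      simp [inner_sub_left, inner_smul_left]
    rw [h3]
    calc _ ≤ ‖Q t - q - M (t • h)‖ * ‖h‖ := abs_real_inner_le_norm _ _
      _ ≤ (e * ‖h‖) * ‖h‖ := by
        gcongr
        exact h2.trans (by gcongr)
      _ = _ := by ring
  have := ja_partition (g := g) (A := e * ‖h‖ ^ 2) (B := |inner ℝ (M h) h| / 2) (by
    intro t t' h0 h1 h2
    have a1 := hQ t (ζ + t' • h)
    have a2 := hQ t' (ζ + t • h)
    rw [add_sub_add_left_eq_sub, ← sub_smul, inner_smul_right] at a1 a2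
    have b1 := abs_le.mp (hQb t h0 (h1.trans h2))
    have b2 := abs_le.mp (hQb t' (h0.trans h1) h2)
    have c1 := abs_le.mp (le_refl |inner ℝ (M h) h|)
    simp only [hg]
    set a := inner ℝ (M h) h
    set D := t' - t with hD
    have hD0 : 0 ≤ D := by linarith
    have ht' : t' = t + D := by linarith
    have e1 : F (ζ + t' • h) - F (ζ + t • h) ≤ D * inner ℝ (Q t') h := by linarith [a2]
    have e2 : D * inner ℝ (Q t) h ≤ F (ζ + t' • h) - F (ζ + t • h) := by linarith [a1]
    have m1 := mul_le_mul_of_nonneg_left b2.2 hD0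
    have m2 := mul_le_mul_of_nonneg_left b1.1 hD0
    have m3 := mul_le_mul_of_nonneg_left c1.2 (mul_nonneg hD0 hD0)
    have m4 := mul_le_mul_of_nonneg_left c1.1 (mul_nonneg hD0 hD0)
    rw [abs_le]
    rw [ht'] at *
    constructor <;> nlinarith)
  have h1 : g 1 - g 0 = F (ζ + h) - F ζ - inner ℝ q h - 1 / 2 * inner ℝ (M h) h := by
    simp [hg]; ring
  rwa [h1] at this

variable [FiniteDimensional ℝ Z]

/-- Lipschitz images avoid: given a Lipschitz `Θ` and Lipschitz `J`, every ball contains a point not in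
the image of the non-differentiability set of `J`. -/
theorem ja_avoid {J Θ : Z → Z} {K K' : NNReal} (hJ : LipschitzWith K J) (hΘ : LipschitzWith K' Θ)
    {δ : ℝ} (hδ : 0 < δ) : ∃ p : Z, ‖p‖ < δ ∧ ∀ w, Θ w = p → DifferentiableAt ℝ J w := by
  letI : MeasurableSpace Z := borel Z
  haveI : BorelSpace Z := ⟨rfl⟩
  let μ : MeasureTheory.Measure Z := MeasureTheory.Measure.hausdorffMeasure (Module.finrank ℝ Z)
  haveI : μ.IsAddHaarMeasure := MeasureTheory.isAddHaarMeasure_hausdorffMeasure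
  have h1 : ∀ᵐ w ∂μ, DifferentiableAt ℝ J w := hJ.ae_differentiableAt
  rw [MeasureTheory.ae_iff] at h1
  have h2 : μ (Set.image Θ {w | ¬ DifferentiableAt ℝ J w}) = 0 := by
    have := hΘ.hausdorffMeasure_image_le (d := Module.finrank ℝ Z) (by positivity)
      {w | ¬ DifferentiableAt ℝ J w}
    refine le_antisymm (this.trans ?_) bot_le
    change _ * μ _ ≤ _
    rw [h1]; simp
  have h3 : 0 < μ (Metric.ball 0 δ) := Metric.measure_ball_pos μ 0 hδ
  have h4 : ¬ (Metric.ball (0:Z) δ ⊆ Set.image Θ {w | ¬ DifferentiableAt ℝ J w}) := by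
    intro hs
    have := MeasureTheory.measure_mono (μ := μ) hs
    rw [h2] at this
    exact absurd h3 (not_lt.mpr this)
  obtain ⟨p, hp, hp'⟩ := not_subset.mp h4
  refine ⟨p, by simpa using hp, fun w hw => ?_⟩
  by_contra hn
  exact hp' ⟨w, hn, hw⟩

theorem ja_prox (F : Z → ℝ) : ∃ (K : NNReal) (J : Z → Z), LipschitzWith K J ∧
    ∀ ζ q, SubG F ζ q → J (ζ + q) = ζ := by
  have mono : ∀ ζ₁ q₁ ζ₂ q₂, SubG F ζ₁ q₁ → SubG F ζ₂ q₂ →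
      ‖ζ₁ - ζ₂‖ ≤ ‖(ζ₁ + q₁) - (ζ₂ + q₂)‖ := by
    intro ζ₁ q₁ ζ₂ q₂ h1 h2
    have a1 := h1 ζ₂
    have a2 := h2 ζ₁
    have a3 : ‖ζ₁ - ζ₂‖ ^ 2 ≤ inner ℝ ((ζ₁ + q₁) - (ζ₂ + q₂)) (ζ₁ - ζ₂) := by
      rw [← real_inner_self_eq_norm_sq]
      simp only [inner_sub_left, inner_sub_right, inner_add_left] at *
      linarith
    have a4 := real_inner_le_norm ((ζ₁ + q₁) - (ζ₂ + q₂)) (ζ₁ - ζ₂)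
    by_contra hlt
    push Not at hlt
    nlinarith [norm_nonneg ((ζ₁ + q₁) - (ζ₂ + q₂))]
  classical
  let R : Set Z := {w | ∃ ζ q, SubG F ζ q ∧ w = ζ + q}
  let J0 : Z → Z := fun w => if h : w ∈ R then h.choose else 0
  have hJ0 : ∀ w (h : w ∈ R), ∃ q, SubG F (J0 w) q ∧ w = J0 w + q := by
    intro w h
    have : J0 w = h.choose := dif_pos h
    rw [this]; exact h.choose_spec
  have hL : LipschitzOnWith 1 J0 R := by
    apply LipschitzOnWith.of_dist_le_mul
    intro a ha b hb
    obtain ⟨q1, h1, e1⟩ := hJ0 a ha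
    obtain ⟨q2, h2, e2⟩ := hJ0 b hb
    have := mono _ _ _ _ h1 h2
    rw [← e1, ← e2] at this
    simpa [dist_eq_norm] using this
  obtain ⟨J, hJ, hE⟩ := hL.extend_finite_dimension
  refine ⟨_, J, hJ, fun ζ q h => ?_⟩
  have hR : ζ + q ∈ R := ⟨ζ, q, h, rfl⟩
  rw [← hE hR]
  obtain ⟨q1, h1, e1⟩ := hJ0 _ hR
  have := mono _ _ _ _ h1 h
  rw [← e1, sub_self, norm_zero] at this
  exact sub_eq_zero.mp (norm_le_zero_iff.mp this)

/-- At a contact point where the prox map is differentiable, `F` is twice differentiable. -/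
theorem ja_second {F : Z → ℝ} {J : Z → Z} (hJF : ∀ ζ q, SubG F ζ q → J (ζ + q) = ζ)
    (hex : ∀ ζ, ∃ q, SubG F ζ q)
    {ζ q : Z} {c r : ℝ} (hc : 0 ≤ c) (hr : 0 < r)
    (hq : SubG F ζ q)
    (hF : ∀ k : Z, ‖k‖ ≤ r → F (ζ + k) ≤ F ζ + inner ℝ q k + c / 2 * ‖k‖ ^ 2)
    (hd : DifferentiableAt ℝ J (ζ + q)) :
    ∃ M : Z →L[ℝ] Z, ∀ e > 0, ∃ s > 0, ∀ h, ‖h‖ ≤ s →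
      |F (ζ + h) - F ζ - inner ℝ q h - 1 / 2 * inner ℝ (M h) h| ≤ e * ‖h‖ ^ 2 := by
  obtain ⟨D, hD⟩ := hd
  have hcl : ∀ h q', 2 * ‖h‖ ≤ r → SubG F (ζ + h) q' → ‖q' - q‖ ≤ 2 * c * ‖h‖ :=
    fun h q' hh hq' => ja_subgrad_close hc hr hq hF hh hq'
  have step : ∀ e > 0, ∃ s > 0, ∀ h, ‖h‖ ≤ s → ∀ q', SubG F (ζ + h) q' →
      ‖h - D (h + (q' - q))‖ ≤ e * ‖h‖ := by
    intro e he
    have h1 := hD.isLittleO.def (c := e / (1 + 2 * c)) (by positivity)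
    rw [Metric.eventually_nhds_iff] at h1
    obtain ⟨s, hs, h1⟩ := h1
    refine ⟨min (r / 2) (s / (2 * (1 + 2 * c))), by positivity, fun h hh q' hq' => ?_⟩
    have h2 := hcl h q' (by linarith [min_le_left (r / 2) (s / (2 * (1 + 2 * c)))]) hq'
    have h3 : ‖h + (q' - q)‖ ≤ (1 + 2 * c) * ‖h‖ := by
      calc _ ≤ ‖h‖ + ‖q' - q‖ := norm_add_le _ _
        _ ≤ _ := by linarith
    have h4 : (1 + 2 * c) * ‖h‖ < s := by
      have : ‖h‖ ≤ s / (2 * (1 + 2 * c)) := hh.trans (min_le_right _ _)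
      rw [le_div_iff₀ (by positivity)] at this
      linarith
    have e1 : ζ + h + q' - (ζ + q) = h + (q' - q) := by abel
    have h5 := h1 (y := ζ + h + q') (by rw [dist_eq_norm, e1]; linarith)
    rw [hJF _ _ hq', hJF _ _ hq, e1, add_sub_cancel_left] at h5
    refine h5.trans ?_
    rw [div_mul_eq_mul_div, div_le_iff₀ (by positivity)]
    nlinarith
  have hsurj : Function.Surjective D := by
    rw [← ContinuousLinearMap.coe_coe, ← LinearMap.range_eq_top]
    by_contra hne
    have hbot : (LinearMap.range (D : Z →ₗ[ℝ] Z))ᗮ ≠ ⊥ := by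
      intro hb; exact hne ((Submodule.orthogonal_eq_bot_iff).mp hb)
    obtain ⟨v, hv, hv0⟩ := Submodule.exists_mem_ne_zero_of_ne_bot hbot
    have hvp : 0 < ‖v‖ := norm_pos_iff.mpr hv0
    obtain ⟨s, hs, h1⟩ := step (1 / 2) (by norm_num)
    obtain ⟨q', hq'⟩ := hex (ζ + (s / ‖v‖) • v)
    have hn : ‖(s / ‖v‖) • v‖ = s := by
      rw [norm_smul, Real.norm_of_nonneg (by positivity)]; field_simp
    have h2 := h1 _ hn.le q' hq'
    rw [hn] at h2
    have h3 : inner ℝ (D ((s / ‖v‖) • v + (q' - q))) v = 0 :=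
      (Submodule.mem_orthogonal _ v).mp hv _ ⟨_, rfl⟩
    have h4 := real_inner_le_norm ((s / ‖v‖) • v - D ((s / ‖v‖) • v + (q' - q))) v
    rw [inner_sub_left, h3, inner_smul_left, real_inner_self_eq_norm_sq] at h4
    simp only [conj_trivial, sub_zero] at h4
    have h5 : s / ‖v‖ * ‖v‖ ^ 2 = s * ‖v‖ := by field_simp
    rw [h5] at h4
    nlinarith
  have hinj : Function.Injective D :=
    (LinearMap.injective_iff_surjective (f := (D : Z →ₗ[ℝ] Z))).mpr hsurj
  let G : Z →L[ℝ] Z :=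
    LinearMap.toContinuousLinearMap
      ((LinearEquiv.ofBijective (D : Z →ₗ[ℝ] Z) ⟨hinj, hsurj⟩).symm : Z →ₗ[ℝ] Z)
  have hG : ∀ z, G (D z) = z := fun z =>
    (LinearEquiv.ofBijective (D : Z →ₗ[ℝ] Z) ⟨hinj, hsurj⟩).symm_apply_apply z
  refine ⟨G - ContinuousLinearMap.id ℝ Z, fun e he => ?_⟩
  obtain ⟨s, hs, h1⟩ := step (e / (‖G‖ + 1)) (by positivity)
  refine ⟨s, hs, fun h hh => ja_expand he.le hex fun k hk q' hq' => ?_⟩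
  have h2 := h1 k (hk.trans hh) q' hq'
  have h3 : q' - q - (G - ContinuousLinearMap.id ℝ Z) k = - G (k - D (k + (q' - q))) := by
    rw [map_sub, hG]; simp; abel
  rw [h3, norm_neg]
  calc _ ≤ ‖G‖ * ‖k - D (k + (q' - q))‖ := G.le_opNorm _
    _ ≤ ‖G‖ * (e / (‖G‖ + 1) * ‖k‖) := by gcongr
    _ ≤ (‖G‖ + 1) * (e / (‖G‖ + 1) * ‖k‖) := by gcongr; linarith
    _ = _ := by field_simp

end JA

section JA2
variable {Z : Type*} [NormedAddCommGroup Z] [InnerProductSpace ℝ Z]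

theorem quad_nonpos {N : Z →L[ℝ] Z}
    (h : ∀ e > 0, ∃ s > 0, ∀ k : Z, ‖k‖ ≤ s → inner ℝ (N k) k ≤ e * ‖k‖ ^ 2) (z : Z) :
    inner ℝ (N z) z ≤ 0 := by
  rcases eq_or_ne z 0 with rfl | hz
  · simp
  have hz' : 0 < ‖z‖ := norm_pos_iff.mpr hz
  have key : ∀ e > 0, inner ℝ (N z) z ≤ e * ‖z‖ ^ 2 := by
    intro e he
    obtain ⟨s, hs, h1⟩ := h e he
    have hn : ‖(s / ‖z‖) • z‖ = s := by
      rw [norm_smul, Real.norm_of_nonneg (by positivity)]; field_simp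
    have h2 := h1 ((s / ‖z‖) • z) hn.le
    rw [hn, map_smul, inner_smul_left, inner_smul_right] at h2
    simp only [conj_trivial] at h2
    have h3 : s / ‖z‖ * (s / ‖z‖ * inner ℝ (N z) z) = s ^ 2 * (inner ℝ (N z) z / ‖z‖ ^ 2) := by
      field_simp
    rw [h3, mul_comm e] at h2
    have h4 := le_of_mul_le_mul_left h2 (by positivity)
    rwa [div_le_iff₀ (by positivity)] at h4
  by_contra hlt
  push Not at hlt
  have := key (inner ℝ (N z) z / (2 * ‖z‖ ^ 2)) (by positivity)
  have h3 : inner ℝ (N z) z / (2 * ‖z‖ ^ 2) * ‖z‖ ^ 2 = inner ℝ (N z) z / 2 := by field_simp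
  linarith

variable [FiniteDimensional ℝ Z]

theorem ja_main {F : Z → ℝ} {L : ℝ} (hex : ∀ ζ, ∃ q, ‖q‖ ≤ L ∧ SubG F ζ q)
    (C : Z →L[ℝ] Z) (hCs : ∀ x y, inner ℝ (C x) y = inner ℝ x (C y))
    (hC : ∀ ζ, F ζ ≤ F 0 + 1 / 2 * inner ℝ (C ζ) ζ) {ε : ℝ} (hε : 0 < ε) :
    ∃ (ζ q : Z) (M : Z →L[ℝ] Z), ‖ζ‖ ≤ ε ∧ ‖q‖ ≤ ε ∧
      (∀ q', SubG F ζ q' → q' = q) ∧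
      (∀ x y, inner ℝ (M x) y = inner ℝ x (M y)) ∧
      (∀ h, 0 ≤ inner ℝ (M h) h) ∧
      (∀ h, inner ℝ (M h) h ≤ inner ℝ (C h) h + ε * ‖h‖ ^ 2) ∧
      ∀ e > 0, ∃ s > 0, ∀ h, ‖h‖ ≤ s →
        |F (ζ + h) - F ζ - inner ℝ q h - 1 / 2 * inner ℝ (M h) h| ≤ e * ‖h‖ ^ 2 := by
  have hex' : ∀ ζ, ∃ q, SubG F ζ q := fun ζ => (hex ζ).imp fun q h => h.2
  -- continuity of F
  have hL : 0 ≤ L := by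
    obtain ⟨q, hq, _⟩ := hex 0
    exact (norm_nonneg q).trans hq
  have hFc : Continuous F := by
    have : LipschitzWith ⟨L, hL⟩ F := by
      apply LipschitzWith.of_le_add_mul
      intro x y
      obtain ⟨q, hq, hs⟩ := hex x
      have h1 := hs y
      have h2 := abs_le.mp (abs_real_inner_le_norm q (y - x))
      have h3 : ‖q‖ * ‖y - x‖ ≤ L * ‖y - x‖ := by gcongr
      rw [dist_eq_norm, norm_sub_rev]
      change _ ≤ F y + L * ‖y - x‖
      linarith [h2.1]
    exact this.continuous
  obtain ⟨K, J, hJ, hJF⟩ := ja_prox F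
  set C' : Z →L[ℝ] Z := C + ε • ContinuousLinearMap.id ℝ Z with hC'
  have hC'a : ∀ z, C' z = C z + ε • z := fun z => rfl
  have hC's : ∀ x y, inner ℝ (C' x) y = inner ℝ x (C' y) := by
    intro x y
    simp [hC'a, inner_add_left, inner_add_right, hCs, inner_smul_left, inner_smul_right]
  have hC'q : ∀ z, inner ℝ (C' z) z = inner ℝ (C z) z + ε * ‖z‖ ^ 2 := by
    intro z
    rw [hC'a, inner_add_left, inner_smul_left, real_inner_self_eq_norm_sq]; simp
  set r0 : ℝ := ε / (2 * (1 + ‖C'‖)) with hr0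
  have hr0p : 0 < r0 := by positivity
  have hr0ε : r0 + ‖C'‖ * r0 = ε / 2 := by rw [hr0]; field_simp
  set δ : ℝ := min (ε / 2) (ε * r0 / 2) with hδ
  have hδp : 0 < δ := by positivity
  let Θ : Z → Z := fun w => w - J w - C' (J w)
  obtain ⟨p, hp, hpd⟩ := ja_avoid hJ (Θ := Θ)
    ((LipschitzWith.id.sub hJ).sub (C'.lipschitz.comp hJ)) hδp
  -- the perturbed maximum
  obtain ⟨ζ, hζ, hmax⟩ := (isCompact_closedBall (0:Z) r0).exists_isMaxOn ⟨0, by simp [hr0p.le]⟩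
    (f := fun z => F z - 1 / 2 * inner ℝ (C' z) z - inner ℝ p z) (by fun_prop)
  have hζr : ‖ζ‖ < r0 := by
    have h1 := hmax (show (0:Z) ∈ Metric.closedBall 0 r0 by simp [hr0p.le])
    simp only [mem_ofPred_eq, map_zero, inner_zero_right] at h1
    rw [hC'q] at h1
    have h2 := hC ζ
    have h3 := (abs_le.mp (abs_real_inner_le_norm p ζ)).1
    have h4 : ‖p‖ < ε * r0 / 2 := hp.trans_le (min_le_right _ _)
    by_contra hge
    push Not at hge
    have m0 : 0 < ‖ζ‖ := hr0p.trans_le hge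
    have m1 := mul_lt_mul_of_pos_right h4 m0
    have m2 : 0 ≤ ε / 2 * ‖ζ‖ * (‖ζ‖ - r0) := by
      have := sub_nonneg.mpr hge
      positivity
    nlinarith
  set q := C' ζ + p with hq
  have htouch : ∀ k : Z, ‖k‖ ≤ r0 - ‖ζ‖ →
      F (ζ + k) ≤ F ζ + inner ℝ q k + 1 / 2 * inner ℝ (C' k) k := by
    intro k hk
    have h1 := hmax (show ζ + k ∈ Metric.closedBall 0 r0 by
      rw [mem_closedBall_zero_iff]; linarith [norm_add_le ζ k])
    simp only [mem_ofPred_eq, map_add, inner_add_left, inner_add_right] at h1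
    have h2 : inner ℝ (C' k) ζ = inner ℝ (C' ζ) k := by rw [hC's, real_inner_comm]
    rw [hq, inner_add_left]
    linarith
  have hCn : ∀ k, inner ℝ (C' k) k ≤ ‖C'‖ * ‖k‖ ^ 2 := by
    intro k
    calc _ ≤ ‖C' k‖ * ‖k‖ := real_inner_le_norm _ _
      _ ≤ (‖C'‖ * ‖k‖) * ‖k‖ := by gcongr; exact C'.le_opNorm k
      _ = _ := by ring
  have htouch' : ∀ k : Z, ‖k‖ ≤ r0 - ‖ζ‖ →
      F (ζ + k) ≤ F ζ + inner ℝ q k + ‖C'‖ / 2 * ‖k‖ ^ 2 := by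
    intro k hk
    linarith [htouch k hk, hCn k]
  have hrp : 0 < r0 - ‖ζ‖ := by linarith
  have huniq : ∀ q', SubG F ζ q' → q' = q := by
    intro q' hq'
    refine sub_eq_zero.mp (ja_zero hrp (norm_nonneg C') fun k hk => ?_)
    have h1 := hq' (ζ + k)
    rw [add_sub_cancel_left] at h1
    rw [inner_sub_left]
    linarith [htouch' k hk]
  have hqs : SubG F ζ q := by
    obtain ⟨q', hq'⟩ := hex' ζ
    rwa [← huniq q' hq']
  have hΘ : Θ (ζ + q) = p := by
    simp only [Θ, hJF _ _ hqs]
    rw [hq]; abel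
  obtain ⟨M0, hM0⟩ := ja_second hJF hex' (norm_nonneg C') hrp hqs htouch' (hpd _ hΘ)
  set M : Z →L[ℝ] Z := (1 / 2 : ℝ) • (M0 + ContinuousLinearMap.adjoint M0) with hM
  have hMq : ∀ h, inner ℝ (M h) h = inner ℝ (M0 h) h := by
    intro h
    simp only [hM, smul_apply, add_apply, inner_smul_left,
      inner_add_left, ContinuousLinearMap.adjoint_inner_left, conj_trivial]
    rw [real_inner_comm h (M0 h)]; ring
  have hexp : ∀ e > 0, ∃ s > 0, ∀ h, ‖h‖ ≤ s →
        |F (ζ + h) - F ζ - inner ℝ q h - 1 / 2 * inner ℝ (M h) h| ≤ e * ‖h‖ ^ 2 := by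
    simpa only [hMq] using hM0
  refine ⟨ζ, q, M, ?_, ?_, huniq, ?_, ?_, ?_, hexp⟩
  · have : 0 ≤ ‖C'‖ * r0 := by positivity
    linarith
  · have h1 : ‖q‖ ≤ ‖C'‖ * ‖ζ‖ + ‖p‖ :=
      (norm_add_le _ _).trans (by gcongr; exact C'.le_opNorm ζ)
    have h2 : ‖C'‖ * ‖ζ‖ ≤ ‖C'‖ * r0 := by gcongr
    have h3 : ‖p‖ < ε / 2 := hp.trans_le (min_le_left _ _)
    linarith
  · intro x y
    simp only [hM, smul_apply, add_apply, inner_smul_left,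
      inner_smul_right, inner_add_left, inner_add_right, ContinuousLinearMap.adjoint_inner_left,
      ContinuousLinearMap.adjoint_inner_right, conj_trivial]
    ring
  · intro h
    have := quad_nonpos (N := -M) (by
      intro e he
      obtain ⟨s, hs, h1⟩ := hexp (e / 2) (by positivity)
      refine ⟨s, hs, fun k hk => ?_⟩
      have h2 := (abs_le.mp (h1 k hk)).2
      have h3 := hqs (ζ + k)
      rw [add_sub_cancel_left] at h3
      simp only [neg_apply, inner_neg_left]
      linarith) h
    simpa using this
  · intro h
    have := quad_nonpos (N := M - C') (by
      intro e he
      obtain ⟨s, hs, h1⟩ := hexp (e / 2) (by positivity)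
      refine ⟨min s (r0 - ‖ζ‖), by positivity, fun k hk => ?_⟩
      have h2 := (abs_le.mp (h1 k (hk.trans (min_le_left _ _)))).1
      have h3 := htouch k (hk.trans (min_le_right _ _))
      simp only [sub_apply, inner_sub_left]
      linarith) h
    simp only [sub_apply, inner_sub_left, hC'q] at this
    linarith

end JA2

section Sums
variable {E : Type*} [NormedAddCommGroup E] [InnerProductSpace ℝ E]

/-- `(p, X)` is a limit of second order superjets of `u` relative to `K` at points tending to `x`. -/
def JetLim (u : E → ℝ) (K : Set E) (x p : E) (X : E →L[ℝ] E) : Prop :=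
  ∃ (xs ps : ℕ → E) (Xs : ℕ → E →L[ℝ] E), (∀ j, xs j ∈ K) ∧
    Tendsto xs atTop (nhds x) ∧ Tendsto (fun j => u (xs j)) atTop (nhds (u x)) ∧
    Tendsto ps atTop (nhds p) ∧ Tendsto Xs atTop (nhds X) ∧
    (∀ j a b, inner ℝ (Xs j a) b = inner ℝ a (Xs j b)) ∧
    ∀ j, ∃ r > 0, ∀ x' ∈ K, ‖x' - xs j‖ ≤ r →
      u x' ≤ u (xs j) + inner ℝ (ps j) (x' - xs j) +
        1 / 2 * inner ℝ (Xs j (x' - xs j)) (x' - xs j)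

theorem bdd_subseq {F : Type*} [NormedAddCommGroup F] [NormedSpace ℝ F] [FiniteDimensional ℝ F]
    {x : ℕ → F} {R : ℝ} (h : ∀ j, ‖x j‖ ≤ R) :
    ∃ (M : F) (φ : ℕ → ℕ), StrictMono φ ∧ Tendsto (x ∘ φ) atTop (nhds M) := by
  have : ProperSpace F := FiniteDimensional.proper_real F
  obtain ⟨M, -, φ, hφ, hM⟩ := tendsto_subseq_of_bounded
    (Metric.isBounded_closedBall (x := (0 : F)) (r := R)) (x := x)
    (by intro j; rw [Metric.mem_closedBall, dist_zero_right]; exact h j)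
  exact ⟨M, φ, hφ, hM⟩

theorem conv_exists {K : Set E} (hK : IsCompact K) (hne : K.Nonempty) {u : E → ℝ}
    (hu : UpperSemicontinuousOn u K) (lam : ℝ) :
    ∃ (F : E → ℝ) (m : E → E), (∀ ξ, m ξ ∈ K) ∧
      (∀ ξ, F ξ = u (m ξ) - lam / 2 * ‖m ξ‖ ^ 2 + lam * inner ℝ (m ξ) ξ) ∧
      ∀ ξ, ∀ x ∈ K, u x - lam / 2 * ‖x‖ ^ 2 + lam * inner ℝ x ξ ≤ F ξ := by
  have h : ∀ ξ : E, ∃ x ∈ K, IsMaxOn (fun x => u x + (- lam / 2 * ‖x‖ ^ 2 + lam * inner ℝ x ξ)) K x := by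
    intro ξ
    apply UpperSemicontinuousOn.exists_isMaxOn hne hK
    apply hu.add
    apply ContinuousOn.upperSemicontinuousOn
    fun_prop
  choose m hm1 hm2 using h
  refine ⟨fun ξ => u (m ξ) - lam / 2 * ‖m ξ‖ ^ 2 + lam * inner ℝ (m ξ) ξ, m, hm1, fun _ => rfl, ?_⟩
  intro ξ x hx
  have := hm2 ξ hx
  simp only [mem_ofPred_eq] at this
  linarith

theorem sums_jet {K : Set E} {u : E → ℝ} (hu : UpperSemicontinuousOn u K) (h0 : (0:E) ∈ K)
    (hu0 : u 0 = 0) {lam : ℝ} (hlam : 0 < lam) {F : E → ℝ}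
    (hF : ∀ ξ, ∀ x ∈ K, u x - lam / 2 * ‖x‖ ^ 2 + lam * inner ℝ x ξ ≤ F ξ)
    {ξs xs : ℕ → E} (hξ : Tendsto ξs atTop (nhds 0)) (hxs : Tendsto xs atTop (nhds 0))
    (hxK : ∀ j, xs j ∈ K)
    (hFx : ∀ j, F (ξs j) = u (xs j) - lam / 2 * ‖xs j‖ ^ 2 + lam * inner ℝ (xs j) (ξs j))
    {N : ℕ → E →L[ℝ] E} {N' : E →L[ℝ] E} (hN : Tendsto N atTop (nhds N'))
    (hNs : ∀ j a b, inner ℝ (N j a) b = inner ℝ a (N j b))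
    (hexp : ∀ j, ∀ e > 0, ∃ s > 0, ∀ h, ‖h‖ ≤ s →
      F (ξs j + h) ≤ F (ξs j) + inner ℝ (lam • xs j) h + 1 / 2 * inner ℝ (N j h) h + e * ‖h‖ ^ 2) :
    JetLim u K 0 0 (N' - lam • ContinuousLinearMap.id ℝ E) := by
  have hε : Tendsto (fun j : ℕ => (1 / ((j:ℝ) + 1))) atTop (nhds 0) :=
    tendsto_one_div_add_atTop_nhds_zero_nat
  refine ⟨xs, fun j => lam • (xs j - ξs j),
    fun j => N j - lam • ContinuousLinearMap.id ℝ E +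
      (1 / ((j:ℝ) + 1)) • ContinuousLinearMap.id ℝ E, hxK, hxs, ?_, ?_, ?_, ?_, ?_⟩
  · rw [hu0]
    have lower : ∀ j, - lam * (‖xs j‖ * ‖ξs j‖) ≤ u (xs j) := by
      intro j
      have h1 := hF (ξs j) 0 h0
      rw [hFx, hu0] at h1
      simp only [norm_zero, inner_zero_left] at h1
      have h2 := mul_le_mul_of_nonneg_left (real_inner_le_norm (xs j) (ξs j)) hlam.le
      have h3 : 0 ≤ lam / 2 * ‖xs j‖ ^ 2 := by positivity
      nlinarith
    have llim : Tendsto (fun j => - lam * (‖xs j‖ * ‖ξs j‖)) atTop (nhds 0) := by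
      have := (hxs.norm.mul hξ.norm).const_mul (-lam)
      simpa using this
    have hxK' : Tendsto xs atTop (nhdsWithin 0 K) :=
      tendsto_nhdsWithin_iff.mpr ⟨hxs, Eventually.of_forall hxK⟩
    rw [tendsto_order]
    constructor
    · intro a ha
      filter_upwards [(tendsto_order.mp llim).1 a ha] with j hj
      exact hj.trans_le (lower j)
    · intro a ha
      have := hu 0 h0 a (show u 0 < a by rw [hu0]; exact ha)
      exact hxK'.eventually this
  · have := (hxs.sub hξ).const_smul lam
    simpa using this
  · have h2 : Tendsto (fun j : ℕ => (1 / ((j:ℝ) + 1)) • ContinuousLinearMap.id ℝ E) atTop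
        (nhds ((0:ℝ) • ContinuousLinearMap.id ℝ E)) := hε.smul_const _
    have := (hN.sub_const (lam • ContinuousLinearMap.id ℝ E)).add h2
    simpa using this
  · intro j a b
    simp [inner_add_left, inner_add_right, inner_sub_left, inner_sub_right, inner_smul_left,
      inner_smul_right, hNs]
  · intro j
    obtain ⟨s, hs, h1⟩ := hexp j (1 / ((j:ℝ) + 1) / 2) (by positivity)
    refine ⟨s, hs, fun x' hx' hxs' => ?_⟩
    obtain ⟨h, rfl⟩ : ∃ h, x' = xs j + h := ⟨x' - xs j, by abel⟩
    rw [add_sub_cancel_left] at *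
    have h2 := h1 h hxs'
    have h3 := hF (ξs j + h) _ hx'
    rw [hFx] at h2
    simp only [add_apply, sub_apply, smul_apply, ContinuousLinearMap.id_apply, inner_add_left,
      inner_add_right, inner_sub_left, inner_smul_left, conj_trivial,
      real_inner_self_eq_norm_sq, norm_add_sq_real] at *
    rw [real_inner_comm h (ξs j)] at *
    nlinarith [h2, h3]

theorem sym_bound {M : E →L[ℝ] E} {c : ℝ} (hc : 0 ≤ c)
    (hs : ∀ x y, inner ℝ (M x) y = inner ℝ x (M y))
    (h0 : ∀ h, 0 ≤ inner ℝ (M h) h) (h1 : ∀ h, inner ℝ (M h) h ≤ c * ‖h‖ ^ 2) : ‖M‖ ≤ c := by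
  refine M.opNorm_le_bound hc fun x => ?_
  by_cases hx : M x = 0
  · rw [hx, norm_zero]; positivity
  have hMx : 0 < ‖M x‖ := norm_pos_iff.mpr hx
  have hx0 : 0 < ‖x‖ := by
    rw [norm_pos_iff]; rintro rfl; simp at hx
  set y := (‖x‖ / ‖M x‖) • M x with hy
  have hyn : ‖y‖ = ‖x‖ := by
    rw [hy, norm_smul, Real.norm_of_nonneg (by positivity)]; field_simp
  have a1 := h1 (x + y)
  have a2 := h0 (x - y)
  have a3 : ‖x + y‖ ^ 2 ≤ 4 * ‖x‖ ^ 2 := by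
    have := norm_add_le x y
    rw [hyn] at this
    nlinarith [norm_nonneg (x + y)]
  have a4 : inner ℝ (M x) y = ‖x‖ * ‖M x‖ := by
    rw [hy, inner_smul_right, real_inner_self_eq_norm_sq]; field_simp
  have a5 : inner ℝ (M y) x = inner ℝ (M x) y := by rw [hs, real_inner_comm]
  simp only [map_add, map_sub, inner_add_left, inner_add_right, inner_sub_left,
    inner_sub_right] at a1 a2
  have a6 := mul_le_mul_of_nonneg_left a3 hc
  nlinarith

/-- First injection into the `L²` product. -/
def inj1 (E : Type*) [NormedAddCommGroup E] [InnerProductSpace ℝ E] : E →L[ℝ] WithLp 2 (E × E) :=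
  ((WithLp.prodContinuousLinearEquiv 2 ℝ E E).symm : (E × E) →L[ℝ] WithLp 2 (E × E)).comp
    (ContinuousLinearMap.inl ℝ E E)
/-- Second injection into the `L²` product. -/
def inj2 (E : Type*) [NormedAddCommGroup E] [InnerProductSpace ℝ E] : E →L[ℝ] WithLp 2 (E × E) :=
  ((WithLp.prodContinuousLinearEquiv 2 ℝ E E).symm : (E × E) →L[ℝ] WithLp 2 (E × E)).comp
    (ContinuousLinearMap.inr ℝ E E)
/-- First projection. -/
def prj1 (E : Type*) [NormedAddCommGroup E] [InnerProductSpace ℝ E] : WithLp 2 (E × E) →L[ℝ] E :=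
  (ContinuousLinearMap.fst ℝ E E).comp
    ((WithLp.prodContinuousLinearEquiv 2 ℝ E E) : WithLp 2 (E × E) →L[ℝ] (E × E))
/-- Second projection. -/
def prj2 (E : Type*) [NormedAddCommGroup E] [InnerProductSpace ℝ E] : WithLp 2 (E × E) →L[ℝ] E :=
  (ContinuousLinearMap.snd ℝ E E).comp
    ((WithLp.prodContinuousLinearEquiv 2 ℝ E E) : WithLp 2 (E × E) →L[ℝ] (E × E))

theorem inj1_apply (h : E) : inj1 E h = WithLp.toLp 2 (h, 0) := rfl
theorem inj2_apply (h : E) : inj2 E h = WithLp.toLp 2 (0, h) := rfl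
theorem prj1_apply (z : WithLp 2 (E × E)) : prj1 E z = z.fst := rfl
theorem prj2_apply (z : WithLp 2 (E × E)) : prj2 E z = z.snd := rfl
theorem inner_prj1 (z : WithLp 2 (E × E)) (h : E) :
    inner ℝ (prj1 E z) h = inner ℝ z (inj1 E h) := by
  rw [WithLp.prod_inner_apply]; simp [inj1_apply, prj1_apply]
theorem inner_prj2 (z : WithLp 2 (E × E)) (h : E) :
    inner ℝ (prj2 E z) h = inner ℝ z (inj2 E h) := by
  rw [WithLp.prod_inner_apply]; simp [inj2_apply, prj2_apply]
theorem inner_prj1' (z : WithLp 2 (E × E)) (h : E) :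
    inner ℝ h (prj1 E z) = inner ℝ (inj1 E h) z := by
  rw [real_inner_comm, inner_prj1, real_inner_comm]
theorem inner_prj2' (z : WithLp 2 (E × E)) (h : E) :
    inner ℝ h (prj2 E z) = inner ℝ (inj2 E h) z := by
  rw [real_inner_comm, inner_prj2, real_inner_comm]
theorem norm_inj1 (h : E) : ‖inj1 E h‖ = ‖h‖ := by
  rw [← sq_eq_sq₀ (norm_nonneg _) (norm_nonneg _), WithLp.prod_norm_sq_eq_of_L2]; simp [inj1_apply]
theorem norm_inj2 (h : E) : ‖inj2 E h‖ = ‖h‖ := by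
  rw [← sq_eq_sq₀ (norm_nonneg _) (norm_nonneg _), WithLp.prod_norm_sq_eq_of_L2]; simp [inj2_apply]
theorem norm_prj1 (z : WithLp 2 (E × E)) : ‖prj1 E z‖ ≤ ‖z‖ := by
  rw [← sq_le_sq₀ (norm_nonneg _) (norm_nonneg _), WithLp.prod_norm_sq_eq_of_L2]
  simp [prj1_apply]
theorem norm_prj2 (z : WithLp 2 (E × E)) : ‖prj2 E z‖ ≤ ‖z‖ := by
  rw [← sq_le_sq₀ (norm_nonneg _) (norm_nonneg _), WithLp.prod_norm_sq_eq_of_L2]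
  simp [prj2_apply]

variable [FiniteDimensional ℝ E]

theorem sums0 {K₁ K₂ : Set E} (hK₁ : IsCompact K₁) (hK₂ : IsCompact K₂) {u v : E → ℝ}
    (hu : UpperSemicontinuousOn u K₁) (hv : UpperSemicontinuousOn v K₂)
    (h₁ : (0:E) ∈ K₁) (h₂ : (0:E) ∈ K₂) (hu0 : u 0 = 0) (hv0 : v 0 = 0)
    (A : WithLp 2 (E × E) →L[ℝ] WithLp 2 (E × E))
    (hA : ∀ x y, inner ℝ (A x) y = inner ℝ x (A y))
    (hmax : ∀ x ∈ K₁, ∀ y ∈ K₂, u x + v y ≤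
      1 / 2 * inner ℝ (A (WithLp.toLp 2 (x, y))) (WithLp.toLp 2 (x, y)))
    {η : ℝ} (hη : 0 < η) :
    ∃ X Y : E →L[ℝ] E, (∀ a b, inner ℝ (X a) b = inner ℝ a (X b)) ∧
      (∀ a b, inner ℝ (Y a) b = inner ℝ a (Y b)) ∧
      (∀ h k : E, inner ℝ (X h) h + inner ℝ (Y k) k ≤
        inner ℝ (A (WithLp.toLp 2 (h, k))) (WithLp.toLp 2 (h, k)) +
          η * ‖A (WithLp.toLp 2 (h, k))‖ ^ 2) ∧
      JetLim u K₁ 0 0 X ∧ JetLim v K₂ 0 0 Y := by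
  set lam : ℝ := 1 / η + ‖A‖ with hlam
  have hlamp : 0 < lam := by positivity
  obtain ⟨F₁, m₁, hm₁, hF₁, hG₁⟩ := conv_exists hK₁ ⟨0, h₁⟩ hu lam
  obtain ⟨F₂, m₂, hm₂, hF₂, hG₂⟩ := conv_exists hK₂ ⟨0, h₂⟩ hv lam
  let F : WithLp 2 (E × E) → ℝ := fun ζ => F₁ ζ.fst + F₂ ζ.snd
  let z : WithLp 2 (E × E) → WithLp 2 (E × E) :=
    fun ζ => WithLp.toLp 2 (m₁ ζ.fst, m₂ ζ.snd)
  have hsub : ∀ ζ, SubG F ζ (lam • z ζ) := by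
    intro ζ ζ'
    have a1 := hG₁ ζ'.fst _ (hm₁ ζ.fst)
    have a2 := hG₂ ζ'.snd _ (hm₂ ζ.snd)
    have b1 := hF₁ ζ.fst
    have b2 := hF₂ ζ.snd
    simp only [F, z, inner_smul_left, WithLp.prod_inner_apply, conj_trivial]
    change _ + lam * (inner ℝ (m₁ ζ.fst) (ζ'.fst - ζ.fst) + inner ℝ (m₂ ζ.snd) (ζ'.snd - ζ.snd)) ≤ _
    simp only [inner_sub_right]
    linarith
  obtain ⟨R₁, hR₁⟩ := hK₁.isBounded.exists_norm_le
  obtain ⟨R₂, hR₂⟩ := hK₂.isBounded.exists_norm_le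
  have hzb : ∀ ζ, ‖z ζ‖ ≤ R₁ + R₂ := by
    intro ζ
    have a1 := hR₁ _ (hm₁ ζ.fst)
    have a2 := hR₂ _ (hm₂ ζ.snd)
    have a3 : ‖z ζ‖ ^ 2 = ‖m₁ ζ.fst‖ ^ 2 + ‖m₂ ζ.snd‖ ^ 2 := WithLp.prod_norm_sq_eq_of_L2 _
    have := norm_nonneg (m₁ ζ.fst)
    have := norm_nonneg (m₂ ζ.snd)
    nlinarith [norm_nonneg (z ζ)]
  have hex : ∀ ζ, ∃ q, ‖q‖ ≤ lam * (R₁ + R₂) ∧ SubG F ζ q := by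
    intro ζ
    refine ⟨_, ?_, hsub ζ⟩
    rw [norm_smul, Real.norm_of_nonneg hlamp.le]
    gcongr; exact hzb ζ
  set C : WithLp 2 (E × E) →L[ℝ] WithLp 2 (E × E) :=
    A + η • (A.comp A) + lam • ContinuousLinearMap.id ℝ _ with hC
  have hCq : ∀ ζ, inner ℝ (C ζ) ζ = inner ℝ (A ζ) ζ + η * ‖A ζ‖ ^ 2 + lam * ‖ζ‖ ^ 2 := by
    intro ζ
    simp only [hC, add_apply, smul_apply, ContinuousLinearMap.id_apply, inner_add_left,
      inner_smul_left, conj_trivial, real_inner_self_eq_norm_sq, ContinuousLinearMap.comp_apply]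
    rw [hA (A ζ) ζ, real_inner_self_eq_norm_sq]
  have hCs : ∀ x y, inner ℝ (C x) y = inner ℝ x (C y) := by
    intro x y
    simp [hC, inner_add_left, inner_add_right, inner_smul_left, inner_smul_right, hA]
  have hF0 : 0 ≤ F 0 := by
    have a1 := hG₁ 0 0 h₁
    have a2 := hG₂ 0 0 h₂
    simp only [hu0, hv0, norm_zero, inner_zero_left] at a1 a2
    simp only [F]
    change 0 ≤ F₁ 0 + F₂ 0
    linarith
  have hFC : ∀ ζ, F ζ ≤ F 0 + 1 / 2 * inner ℝ (C ζ) ζ := by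
    intro ζ
    rw [hCq]
    have a1 := hmax _ (hm₁ ζ.fst) _ (hm₂ ζ.snd)
    change _ ≤ 1 / 2 * inner ℝ (A (z ζ)) (z ζ) at a1
    have b : F ζ = u (m₁ ζ.fst) + v (m₂ ζ.snd) - lam / 2 * ‖z ζ‖ ^ 2 + lam * inner ℝ (z ζ) ζ := by
      have a3 : ‖z ζ‖ ^ 2 = ‖m₁ ζ.fst‖ ^ 2 + ‖m₂ ζ.snd‖ ^ 2 := WithLp.prod_norm_sq_eq_of_L2 _
      have a4 : inner ℝ (z ζ) ζ = inner ℝ (m₁ ζ.fst) ζ.fst + inner ℝ (m₂ ζ.snd) ζ.snd :=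
        WithLp.prod_inner_apply _ _
      rw [a3, a4]; simp only [F, hF₁ ζ.fst, hF₂ ζ.snd]; ring
    obtain ⟨h, hh⟩ : ∃ h, z ζ = ζ + h := ⟨z ζ - ζ, by abel⟩
    rw [hh] at a1 b
    have c1 : inner ℝ (A h) ζ = inner ℝ (A ζ) h := by rw [hA, real_inner_comm]
    have c2 : inner ℝ (A h) h ≤ ‖A‖ * ‖h‖ ^ 2 := by
      calc _ ≤ ‖A h‖ * ‖h‖ := real_inner_le_norm _ _
        _ ≤ (‖A‖ * ‖h‖) * ‖h‖ := by gcongr; exact A.le_opNorm h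
        _ = _ := by ring
    have c3 : 2 * inner ℝ (A ζ) h ≤ η * ‖A ζ‖ ^ 2 + 1 / η * ‖h‖ ^ 2 := by
      have d1 := real_inner_le_norm (A ζ) h
      have d2 : 0 ≤ η * (‖A ζ‖ - 1 / η * ‖h‖) ^ 2 := by positivity
      have d3 : η * (‖A ζ‖ - 1 / η * ‖h‖) ^ 2 =
        η * ‖A ζ‖ ^ 2 - 2 * (‖A ζ‖ * ‖h‖) + 1 / η * ‖h‖ ^ 2 := by field_simp; ring
      linarith
    simp only [map_add, inner_add_left, inner_add_right, norm_add_sq_real,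
      real_inner_self_eq_norm_sq] at a1 b
    rw [real_inner_comm ζ h] at b
    have e1 : lam * ‖h‖ ^ 2 = 1 / η * ‖h‖ ^ 2 + ‖A‖ * ‖h‖ ^ 2 := by rw [hlam]; ring
    linarith
  choose ζs qs Ms hζs hqs huniq hMs hM0 hMC hMe using fun j : ℕ =>
    ja_main hex C hCs hFC (ε := 1 / ((j:ℝ) + 1)) (by positivity)
  have hε : Tendsto (fun j : ℕ => (1 / ((j:ℝ) + 1))) atTop (nhds 0) :=
    tendsto_one_div_add_atTop_nhds_zero_nat
  have hε1 : ∀ j : ℕ, 1 / ((j:ℝ) + 1) ≤ 1 := by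
    intro j
    rw [div_le_one (by positivity)]
    linarith [(Nat.cast_nonneg j : (0:ℝ) ≤ j)]
  -- block diagonal structure
  have hblock : ∀ j (h k : E), inner ℝ (Ms j (WithLp.toLp 2 (h, k))) (WithLp.toLp 2 (h, k)) =
      inner ℝ (Ms j (WithLp.toLp 2 (h, 0))) (WithLp.toLp 2 (h, 0)) +
      inner ℝ (Ms j (WithLp.toLp 2 (0, k))) (WithLp.toLp 2 (0, k)) := by
    intro j h k
    have key : ∀ e > 0, ∃ s > 0, ∀ z : WithLp 2 (E × E), ‖z‖ ≤ s →
        |inner ℝ (Ms j z) z - inner ℝ (Ms j (inj1 E (prj1 E z))) (inj1 E (prj1 E z)) -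
          inner ℝ (Ms j (inj2 E (prj2 E z))) (inj2 E (prj2 E z))| ≤ e * ‖z‖ ^ 2 := by
      intro e he
      obtain ⟨s, hs, h1⟩ := hMe j (e / 6) (by positivity)
      refine ⟨s, hs, fun z hz => ?_⟩
      have n1 : ‖inj1 E (prj1 E z)‖ ≤ ‖z‖ := by rw [norm_inj1]; exact norm_prj1 z
      have n2 : ‖inj2 E (prj2 E z)‖ ≤ ‖z‖ := by rw [norm_inj2]; exact norm_prj2 z
      have a0 := abs_le.mp (h1 z hz)
      have a1 := abs_le.mp (h1 _ (n1.trans hz))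
      have a2 := abs_le.mp (h1 _ (n2.trans hz))
      have m1 : e / 6 * ‖inj1 E (prj1 E z)‖ ^ 2 ≤ e / 6 * ‖z‖ ^ 2 := by gcongr
      have m2 : e / 6 * ‖inj2 E (prj2 E z)‖ ^ 2 ≤ e / 6 * ‖z‖ ^ 2 := by gcongr
      have f1 : F (ζs j + inj1 E (prj1 E z)) = F₁ ((ζs j).fst + z.fst) + F₂ ((ζs j).snd + 0) := rfl
      have f2 : F (ζs j + inj2 E (prj2 E z)) = F₁ ((ζs j).fst + 0) + F₂ ((ζs j).snd + z.snd) := rfl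
      have f3 : F (ζs j + z) = F₁ ((ζs j).fst + z.fst) + F₂ ((ζs j).snd + z.snd) := rfl
      have f4 : F (ζs j) = F₁ (ζs j).fst + F₂ (ζs j).snd := rfl
      have f5 : inner ℝ (qs j) z = inner ℝ (qs j) (inj1 E (prj1 E z)) +
          inner ℝ (qs j) (inj2 E (prj2 E z)) := by
        rw [← inner_add_right]; congr 1
        refine WithLp.ofLp_injective 2 (Prod.ext ?_ ?_) <;> simp [inj1_apply, inj2_apply, prj1_apply, prj2_apply]
      rw [add_zero] at f1 f2
      rw [f1, f4] at a1
      rw [f2, f4] at a2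
      rw [f3, f4, f5] at a0
      rw [abs_le]
      constructor <;> linarith
    have b1 := quad_nonpos (N := Ms j - ((inj1 E).comp (prj1 E)).comp ((Ms j).comp ((inj1 E).comp (prj1 E)))
      - ((inj2 E).comp (prj2 E)).comp ((Ms j).comp ((inj2 E).comp (prj2 E)))) (by
        intro e he
        obtain ⟨s, hs, h1⟩ := key e he
        refine ⟨s, hs, fun z hz => ?_⟩
        have := (abs_le.mp (h1 z hz)).2
        simp only [sub_apply, ContinuousLinearMap.comp_apply, inner_sub_left]
        rwa [← inner_prj1', inner_prj1, ← inner_prj2', inner_prj2]) (WithLp.toLp 2 (h, k))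
    have b2 := quad_nonpos (N := - (Ms j - ((inj1 E).comp (prj1 E)).comp ((Ms j).comp ((inj1 E).comp (prj1 E)))
      - ((inj2 E).comp (prj2 E)).comp ((Ms j).comp ((inj2 E).comp (prj2 E))))) (by
        intro e he
        obtain ⟨s, hs, h1⟩ := key e he
        refine ⟨s, hs, fun z hz => ?_⟩
        have := (abs_le.mp (h1 z hz)).1
        simp only [neg_apply, inner_neg_left, sub_apply, ContinuousLinearMap.comp_apply, inner_sub_left]
        rw [← inner_prj1', inner_prj1, ← inner_prj2', inner_prj2]
        linarith) (WithLp.toLp 2 (h, k))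
    simp only [neg_apply, inner_neg_left, sub_apply, ContinuousLinearMap.comp_apply, inner_sub_left] at b1 b2
    rw [← inner_prj1', inner_prj1, ← inner_prj2', inner_prj2] at b1 b2
    change inner ℝ (Ms j (WithLp.toLp 2 (h, k))) (WithLp.toLp 2 (h, k)) -
      inner ℝ (Ms j (WithLp.toLp 2 (h, 0))) (WithLp.toLp 2 (h, 0)) -
      inner ℝ (Ms j (WithLp.toLp 2 (0, k))) (WithLp.toLp 2 (0, k)) ≤ 0 at b1
    change -(inner ℝ (Ms j (WithLp.toLp 2 (h, k))) (WithLp.toLp 2 (h, k)) -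
      inner ℝ (Ms j (WithLp.toLp 2 (h, 0))) (WithLp.toLp 2 (h, 0)) -
      inner ℝ (Ms j (WithLp.toLp 2 (0, k))) (WithLp.toLp 2 (0, k))) ≤ 0 at b2
    linarith
  have hMb : ∀ j, ‖Ms j‖ ≤ ‖C‖ + 1 := by
    intro j
    refine sym_bound (by positivity) (hMs j) (hM0 j) fun h => (hMC j h).trans ?_
    have c2 : inner ℝ (C h) h ≤ ‖C‖ * ‖h‖ ^ 2 := by
      calc _ ≤ ‖C h‖ * ‖h‖ := real_inner_le_norm _ _
        _ ≤ (‖C‖ * ‖h‖) * ‖h‖ := by gcongr; exact C.le_opNorm h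
        _ = _ := by ring
    nlinarith [mul_le_mul_of_nonneg_right (hε1 j) (sq_nonneg ‖h‖)]
  obtain ⟨M, φ, hφ, hM⟩ := bdd_subseq hMb
  have hεφ := hε.comp hφ.tendsto_atTop
  have hqz : ∀ j, lam • z (ζs j) = qs j := fun j => huniq j _ (hsub _)
  have hζ0 : Tendsto (fun j => ζs (φ j)) atTop (nhds 0) :=
    squeeze_zero_norm (fun j => hζs (φ j)) hεφ
  have hq0 : Tendsto (fun j => qs (φ j)) atTop (nhds 0) :=
    squeeze_zero_norm (fun j => hqs (φ j)) hεφ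
  have hz0 : Tendsto (fun j => z (ζs (φ j))) atTop (nhds 0) := by
    have h1 := hq0.const_smul lam⁻¹
    rw [smul_zero] at h1
    refine h1.congr fun j => ?_
    rw [← hqz, smul_smul, inv_mul_cancel₀ hlamp.ne', one_smul]
  have hsymM : ∀ x y, inner ℝ (M x) y = inner ℝ x (M y) := by
    intro x y
    have h1 : Tendsto (fun j => inner ℝ (Ms (φ j) x) y) atTop (nhds (inner ℝ (M x) y)) :=
      (((ContinuousLinearMap.apply ℝ _ x).continuous.tendsto M).comp hM).inner tendsto_const_nhds
    have h2 : Tendsto (fun j => inner ℝ x (Ms (φ j) y)) atTop (nhds (inner ℝ x (M y))) :=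
      tendsto_const_nhds.inner (((ContinuousLinearMap.apply ℝ _ y).continuous.tendsto M).comp hM)
    exact tendsto_nhds_unique h1 (h2.congr fun j => (hMs (φ j) x y).symm)
  have hlimq : ∀ x, Tendsto (fun j => inner ℝ (Ms (φ j) x) x) atTop (nhds (inner ℝ (M x) x)) :=
    fun x => (((ContinuousLinearMap.apply ℝ _ x).continuous.tendsto M).comp hM).inner
      tendsto_const_nhds
  have hMC' : ∀ h, inner ℝ (M h) h ≤ inner ℝ (C h) h := by
    intro h
    have h2 : Tendsto (fun j => inner ℝ (C h) h + (1 / ((φ j : ℝ) + 1)) * ‖h‖ ^ 2) atTop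
        (nhds (inner ℝ (C h) h + 0 * ‖h‖ ^ 2)) := (hεφ.mul_const _).const_add _
    rw [zero_mul, add_zero] at h2
    exact le_of_tendsto_of_tendsto' (hlimq h) h2 fun j => hMC (φ j) h
  refine ⟨(prj1 E).comp (M.comp (inj1 E)) - lam • ContinuousLinearMap.id ℝ E,
    (prj2 E).comp (M.comp (inj2 E)) - lam • ContinuousLinearMap.id ℝ E, ?_, ?_, ?_, ?_, ?_⟩
  · intro a b
    simp only [sub_apply, smul_apply, ContinuousLinearMap.comp_apply, inner_sub_left,
      inner_sub_right, inner_smul_left, inner_smul_right, conj_trivial,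
      ContinuousLinearMap.id_apply, inner_prj1, inner_prj1', hsymM]
  · intro a b
    simp only [sub_apply, smul_apply, ContinuousLinearMap.comp_apply, inner_sub_left,
      inner_sub_right, inner_smul_left, inner_smul_right, conj_trivial,
      ContinuousLinearMap.id_apply, inner_prj2, inner_prj2', hsymM]
  · intro h k
    simp only [sub_apply, smul_apply, ContinuousLinearMap.comp_apply, inner_sub_left,
      inner_smul_left, conj_trivial, ContinuousLinearMap.id_apply, inner_prj1, inner_prj2,
      real_inner_self_eq_norm_sq]
    have h1 := hMC' (WithLp.toLp 2 (h, k))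
    have hn : ‖WithLp.toLp 2 (h, k)‖ ^ 2 = ‖h‖ ^ 2 + ‖k‖ ^ 2 := WithLp.prod_norm_sq_eq_of_L2 _
    rw [hCq, hn] at h1
    have h2 : inner ℝ (M (WithLp.toLp 2 (h, k))) (WithLp.toLp 2 (h, k)) =
      inner ℝ (M (inj1 E h)) (inj1 E h) + inner ℝ (M (inj2 E k)) (inj2 E k) :=
      tendsto_nhds_unique (hlimq _) (((hlimq (inj1 E h)).add (hlimq (inj2 E k))).congr
        fun j => (hblock (φ j) h k).symm)
    rw [h2] at h1
    linarith
  · refine sums_jet (N := fun j => (prj1 E).comp ((Ms (φ j)).comp (inj1 E)))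
      (ξs := fun j => (ζs (φ j)).fst) (xs := fun j => m₁ (ζs (φ j)).fst)
      hu h₁ hu0 hlamp hG₁ ?_ ?_ (fun j => hm₁ _) (fun j => hF₁ _) ?_ ?_ ?_
    · exact ((prj1 E).continuous.tendsto' 0 0 (map_zero _)).comp hζ0
    · exact ((prj1 E).continuous.tendsto' 0 0 (map_zero _)).comp hz0
    · exact ((continuous_const.clm_comp (continuous_id.clm_comp continuous_const)).tendsto M).comp hM
    · intro j a b
      simp only [ContinuousLinearMap.comp_apply, inner_prj1, inner_prj1', hMs]
    · intro j e he
      obtain ⟨s, hs, h1⟩ := hMe (φ j) e he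
      refine ⟨s, hs, fun h hh => ?_⟩
      have h2 := (abs_le.mp (h1 (inj1 E h) (by rwa [norm_inj1]))).2
      have f1 : F (ζs (φ j) + inj1 E h) = F₁ ((ζs (φ j)).fst + h) + F₂ ((ζs (φ j)).snd + 0) := rfl
      have f4 : F (ζs (φ j)) = F₁ (ζs (φ j)).fst + F₂ (ζs (φ j)).snd := rfl
      rw [add_zero] at f1
      rw [f1, f4, ← hqz, norm_inj1, ← inner_prj1, map_smul] at h2
      simp only [ContinuousLinearMap.comp_apply, inner_prj1]
      change _ - inner ℝ (lam • m₁ (ζs (φ j)).fst) h - _ ≤ _ at h2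
      linarith
  · refine sums_jet (N := fun j => (prj2 E).comp ((Ms (φ j)).comp (inj2 E)))
      (ξs := fun j => (ζs (φ j)).snd) (xs := fun j => m₂ (ζs (φ j)).snd)
      hv h₂ hv0 hlamp hG₂ ?_ ?_ (fun j => hm₂ _) (fun j => hF₂ _) ?_ ?_ ?_
    · exact ((prj2 E).continuous.tendsto' 0 0 (map_zero _)).comp hζ0
    · exact ((prj2 E).continuous.tendsto' 0 0 (map_zero _)).comp hz0
    · exact ((continuous_const.clm_comp (continuous_id.clm_comp continuous_const)).tendsto M).comp hM
    · intro j a b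
      simp only [ContinuousLinearMap.comp_apply, inner_prj2, inner_prj2', hMs]
    · intro j e he
      obtain ⟨s, hs, h1⟩ := hMe (φ j) e he
      refine ⟨s, hs, fun h hh => ?_⟩
      have h2 := (abs_le.mp (h1 (inj2 E h) (by rwa [norm_inj2]))).2
      have f1 : F (ζs (φ j) + inj2 E h) = F₁ ((ζs (φ j)).fst + 0) + F₂ ((ζs (φ j)).snd + h) := rfl
      have f4 : F (ζs (φ j)) = F₁ (ζs (φ j)).fst + F₂ (ζs (φ j)).snd := rfl
      rw [add_zero] at f1
      rw [f1, f4, ← hqz, norm_inj2, ← inner_prj2, map_smul] at h2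
      simp only [ContinuousLinearMap.comp_apply, inner_prj2]
      change _ - inner ℝ (lam • m₂ (ζs (φ j)).snd) h - _ ≤ _ at h2
      linarith

theorem jetlim_translate {u : E → ℝ} {K : Set E} {x p : E} {X : E →L[ℝ] E}
    (h : JetLim (fun y => u (x + y) - u x - inner ℝ p y) {y | x + y ∈ K} 0 0 X) :
    JetLim u K x p X := by
  obtain ⟨xs, ps, Xs, h1, h2, h3, h4, h5, h6, h7⟩ := h
  refine ⟨fun j => x + xs j, fun j => p + ps j, Xs, h1, ?_, ?_, ?_, h5, h6, ?_⟩
  · simpa using h2.const_add x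
  · have a1 : Tendsto (fun j => inner ℝ p (xs j)) atTop (nhds (inner ℝ p 0)) :=
      tendsto_const_nhds.inner h2
    have a2 := (h3.add a1).add_const (u x)
    simp only [add_zero, sub_self, inner_zero_right, zero_add, sub_zero] at a2
    refine a2.congr fun j => ?_
    ring
  · simpa using h4.const_add p
  · intro j
    obtain ⟨r, hr, h8⟩ := h7 j
    refine ⟨r, hr, fun x' hx' hn => ?_⟩
    have e1 : x' - x - xs j = x' - (x + xs j) := by abel
    have e2 : x + (x' - x) = x' := by abel
    have h9 := h8 (x' - x) (by simpa using hx') (by rw [e1]; exact hn)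
    simp only [e1, e2] at h9
    have e3 : inner ℝ p (x' - x) = inner ℝ p (x' - (x + xs j)) + inner ℝ p (xs j) := by
      rw [← inner_add_right, ← e1]; congr 1; abel
    rw [inner_add_left]
    linarith

theorem usc_translate {u : E → ℝ} {K : Set E} {x p : E} (hu : UpperSemicontinuousOn u K) :
    UpperSemicontinuousOn (fun y => u (x + y) - u x - inner ℝ p y) {y | x + y ∈ K} := by
  have h1 : UpperSemicontinuousOn (fun y => u (x + y)) {y | x + y ∈ K} := by
    intro y hy a ha
    have := hu (x + y) hy a ha
    have hc : Tendsto (fun y => x + y) (nhdsWithin y {y | x + y ∈ K}) (nhdsWithin (x + y) K) :=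
      tendsto_nhdsWithin_iff.mpr ⟨(Continuous.tendsto (by fun_prop) y).mono_left nhdsWithin_le_nhds,
        eventually_mem_nhdsWithin⟩
    exact hc.eventually this
  have h2 : UpperSemicontinuousOn (fun y => - u x - inner ℝ p y) {y | x + y ∈ K} :=
    ContinuousOn.upperSemicontinuousOn (by fun_prop)
  have e : (fun y => u (x + y) - u x - inner ℝ p y) =
      fun y => u (x + y) + (- u x - inner ℝ p y) := by funext y; ring
  rw [e]
  exact h1.add h2

/-- The theorem on sums (Crandall–Ishii lemma) for quadratic test functions. -/
theorem sums {K₁ K₂ : Set E} (hK₁ : IsCompact K₁) (hK₂ : IsCompact K₂) {u v : E → ℝ}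
    (hu : UpperSemicontinuousOn u K₁) (hv : UpperSemicontinuousOn v K₂)
    {x y p q : E} (h₁ : x ∈ K₁) (h₂ : y ∈ K₂)
    (A : WithLp 2 (E × E) →L[ℝ] WithLp 2 (E × E))
    (hA : ∀ x y, inner ℝ (A x) y = inner ℝ x (A y))
    (hmax : ∀ h k, x + h ∈ K₁ → y + k ∈ K₂ → u (x + h) + v (y + k) ≤
      u x + v y + inner ℝ p h + inner ℝ q k +
      1 / 2 * inner ℝ (A (WithLp.toLp 2 (h, k))) (WithLp.toLp 2 (h, k)))
    {η : ℝ} (hη : 0 < η) :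
    ∃ X Y : E →L[ℝ] E, (∀ a b, inner ℝ (X a) b = inner ℝ a (X b)) ∧
      (∀ a b, inner ℝ (Y a) b = inner ℝ a (Y b)) ∧
      (∀ h k : E, inner ℝ (X h) h + inner ℝ (Y k) k ≤
        inner ℝ (A (WithLp.toLp 2 (h, k))) (WithLp.toLp 2 (h, k)) +
          η * ‖A (WithLp.toLp 2 (h, k))‖ ^ 2) ∧
      JetLim u K₁ x p X ∧ JetLim v K₂ y q Y := by
  have hc : ∀ (K : Set E) (x : E), IsCompact K → IsCompact {y | x + y ∈ K} := fun K x hK =>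
    (Homeomorph.addLeft x).isClosedEmbedding.isCompact_preimage hK
  obtain ⟨X, Y, h1, h2, h3, h4, h5⟩ := sums0 (hc _ x hK₁) (hc _ y hK₂)
    (usc_translate (p := p) hu) (usc_translate (p := q) hv) (by simpa using h₁) (by simpa using h₂)
    (by simp) (by simp) A hA (by
      intro h hh k hk
      have := hmax h k hh hk
      linarith) hη
  exact ⟨X, Y, h1, h2, h3, jetlim_translate h4, jetlim_translate h5⟩

end Sums

/-- Space-time with its Euclidean structure. -/
abbrev Et (d : ℕ) : Type := WithLp 2 (ℝ × EuclideanSpace ℝ (Fin d))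

/-- The quadratic test function. -/
def quadF {d : ℕ} (z₀ p : Et d) (X : Et d →L[ℝ] Et d) (z : Et d) : ℝ :=
  inner ℝ p (z - z₀) + 1 / 2 * inner ℝ (X (z - z₀)) (z - z₀)

/-- The spatial block of a space-time operator, as a matrix. -/
def xmat {d : ℕ} (X : Et d →L[ℝ] Et d) : Matrix (Fin d) (Fin d) ℝ :=
  Matrix.of fun i j => (X (WithLp.toLp 2 (0, EuclideanSpace.single j 1))).snd i

/-- The injection of space into space-time. -/
def spL (d : ℕ) : EuclideanSpace ℝ (Fin d) →L[ℝ] Et d :=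
  (WithLp.prodContinuousLinearEquiv 2 ℝ ℝ (EuclideanSpace ℝ (Fin d))).symm.toContinuousLinearMap.comp
    (ContinuousLinearMap.inr ℝ ℝ (EuclideanSpace ℝ (Fin d)))

theorem spL_apply {d : ℕ} (h : EuclideanSpace ℝ (Fin d)) : spL d h = WithLp.toLp 2 (0, h) := rfl

theorem quadF_deriv {d : ℕ} (z₀ p : Et d) (X : Et d →L[ℝ] Et d)
    (hX : ∀ a b, inner ℝ (X a) b = inner ℝ a (X b)) (z : Et d) :
    HasFDerivAt (quadF z₀ p X) (innerSL ℝ (p + X (z - z₀))) z := by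
  have h0 : HasFDerivAt (fun z : Et d => z - z₀) (ContinuousLinearMap.id ℝ (Et d)) z :=
    (hasFDerivAt_id z).sub_const z₀
  have h1 : HasFDerivAt (fun z : Et d => X (z - z₀)) X z := by
    have := X.hasFDerivAt.comp z h0
    rw [ContinuousLinearMap.comp_id] at this
    exact this
  have h2 := (hasFDerivAt_const p z).inner ℝ h0
  have h3 := (h1.inner ℝ h0).const_mul (1 / 2)
  refine (h2.add h3).congr_fderiv ?_
  ext v
  have e1 := hX v (z - z₀)
  have e2 := real_inner_comm v (X (z - z₀))
  simp only [add_apply, smul_apply, ContinuousLinearMap.comp_apply, ContinuousLinearMap.prod_apply,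
    fderivInnerCLM_apply, innerSL_apply_apply, inner_add_left, zero_apply, inner_zero_left,
    ContinuousLinearMap.id_apply, smul_eq_mul, add_zero]
  rw [e1, e2]
  ring

theorem xmat_apply {d : ℕ} (X : Et d →L[ℝ] Et d) (v : EuclideanSpace ℝ (Fin d)) (i : Fin d) :
    (X (spL d v)).snd i = ∑ j, xmat X i j * v j := by
  let L : EuclideanSpace ℝ (Fin d) →ₗ[ℝ] ℝ :=
    (EuclideanSpace.proj (𝕜 := ℝ) i : EuclideanSpace ℝ (Fin d) →L[ℝ] ℝ).toLinearMap.comp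
      ((WithLp.sndL 2 ℝ ℝ (EuclideanSpace ℝ (Fin d))).toLinearMap.comp
        (X.toLinearMap.comp (spL d).toLinearMap))
  have hL : ∀ v, L v = (X (spL d v)).snd i := fun v => rfl
  have hv : v = ∑ j, v j • EuclideanSpace.single j (1 : ℝ) := by
    ext i; simp [Finset.sum_apply, Pi.single_apply]
  rw [← hL]
  conv_lhs => rw [hv]
  rw [map_sum]
  refine Finset.sum_congr rfl fun j _ => ?_
  rw [map_smul, hL, smul_eq_mul, mul_comm]
  rfl

theorem xmat_continuous {d : ℕ} : Continuous (xmat (d := d)) := by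
  refine continuous_matrix fun i j => ?_
  have h1 : Continuous fun X : Et d →L[ℝ] Et d =>
      X (WithLp.toLp 2 (0, EuclideanSpace.single j 1)) := by fun_prop
  exact (EuclideanSpace.proj (𝕜 := ℝ) i : EuclideanSpace ℝ (Fin d) →L[ℝ] ℝ).continuous.comp
    ((WithLp.sndL 2 ℝ ℝ (EuclideanSpace ℝ (Fin d))).continuous.comp h1)

theorem quad_C12 {d : ℕ} (z₀ p : Et d) (X : Et d →L[ℝ] Et d)
    (hX : ∀ a b, inner ℝ (X a) b = inner ℝ a (X b)) :
    IsC12 d (fun t x => quadF z₀ p X (WithLp.toLp 2 (t, x)))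
      (fun t x => (p + X (WithLp.toLp 2 (t, x) - z₀)).fst)
      (fun t x => (p + X (WithLp.toLp 2 (t, x) - z₀)).snd)
      (fun _ _ => xmat X) := by
  have hd : ∀ (t : ℝ) (x : EuclideanSpace ℝ (Fin d)),
      HasFDerivAt (fun y => (WithLp.toLp 2 (t, y) : Et d)) (spL d) x := by
    intro t x
    have := ((spL d).hasFDerivAt (x := x)).const_add (WithLp.toLp 2 (t, 0) : Et d)
    refine this.congr_of_eventuallyEq (Eventually.of_forall fun y => ?_)
    show _ = WithLp.toLp 2 (t, 0) + spL d y
    rw [spL_apply, ← WithLp.toLp_add]; simp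
  have hct : Continuous fun z : ℝ × EuclideanSpace ℝ (Fin d) =>
      (p + X (WithLp.toLp 2 (z.1, z.2) - z₀) : Et d) := by
    have : Continuous fun z : ℝ × EuclideanSpace ℝ (Fin d) => (WithLp.toLp 2 (z.1, z.2) : Et d) :=
      WithLp.prod_continuous_toLp 2 _ _
    fun_prop
  refine ⟨?_, ?_, ?_, ?_, ?_, ?_⟩
  · intro t x
    have h1 : HasDerivAt (fun s : ℝ => (WithLp.toLp 2 (s, x) : Et d)) (WithLp.toLp 2 (1, 0)) t := by
      have h2 := ((hasDerivAt_id t).smul_const (WithLp.toLp 2 (1, 0) : Et d)).const_add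
        (WithLp.toLp 2 (0, x) : Et d)
      rw [one_smul] at h2
      refine h2.congr_of_eventuallyEq (Eventually.of_forall fun y => ?_)
      show _ = WithLp.toLp 2 (0, x) + y • WithLp.toLp 2 (1, 0)
      rw [← WithLp.toLp_smul, ← WithLp.toLp_add]; simp
    have h3 := (quadF_deriv z₀ p X hX (WithLp.toLp 2 (t, x))).comp_hasDerivAt t h1
    refine h3.congr_deriv ?_
    rw [innerSL_apply_apply, WithLp.prod_inner_apply]
    simp
  · intro t x
    rw [hasGradientAt_iff_hasFDerivAt]
    refine ((quadF_deriv z₀ p X hX (WithLp.toLp 2 (t, x))).comp x (hd t x)).congr_fderiv ?_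
    ext v
    simp only [ContinuousLinearMap.comp_apply, innerSL_apply_apply, spL_apply, WithLp.prod_inner_apply]
    simp [inner_add_left, inner_sub_left]
  · intro t x
    refine ⟨(WithLp.sndL 2 ℝ ℝ (EuclideanSpace ℝ (Fin d))).comp (X.comp (spL d)), ?_, fun v i =>
      xmat_apply X v i⟩
    have h1 := X.hasFDerivAt.comp x ((hd t x).sub_const z₀)
    exact (WithLp.sndL 2 ℝ ℝ (EuclideanSpace ℝ (Fin d))).hasFDerivAt.comp x (h1.const_add p)
  · exact (WithLp.fstL 2 ℝ ℝ (EuclideanSpace ℝ (Fin d))).continuous.comp hct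
  · exact (WithLp.sndL 2 ℝ ℝ (EuclideanSpace ℝ (Fin d))).continuous.comp hct
  · exact continuous_const

/-- Localized space-time set. -/
def Nb {d : ℕ} (T : ℝ) (D : Set (EuclideanSpace ℝ (Fin d))) (t : ℝ) (x : EuclideanSpace ℝ (Fin d))
    (r : ℝ) : Set (Et d) :=
  {z | z.fst ∈ Icc 0 T ∧ z.snd ∈ D ∧ |z.fst - t| ≤ r ∧ ‖z.snd - x‖ ≤ r}

theorem jet_nhds {d : ℕ} {T : ℝ} {D : Set (EuclideanSpace ℝ (Fin d))} {t : ℝ}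
    {x : EuclideanSpace ℝ (Fin d)} {r : ℝ} {z : Et d} (h1 : |z.fst - t| < r) (h2 : ‖z.snd - x‖ < r)
    {r' : ℝ} (hr' : 0 < r') :
    ∀ᶠ y in nhdsWithin (z.fst, z.snd) (Icc 0 T ×ˢ D),
      (WithLp.toLp 2 (y.1, y.2) : Et d) ∈ Nb T D t x r ∧
        ‖(WithLp.toLp 2 (y.1, y.2) : Et d) - z‖ ≤ r' := by
  have hc : Continuous fun z : ℝ × EuclideanSpace ℝ (Fin d) => (WithLp.toLp 2 (z.1, z.2) : Et d) :=
    WithLp.prod_continuous_toLp 2 _ _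
  have c1 : Continuous fun y : ℝ × EuclideanSpace ℝ (Fin d) => |y.1 - t| := by fun_prop
  have c2 : Continuous fun y : ℝ × EuclideanSpace ℝ (Fin d) => ‖y.2 - x‖ := by fun_prop
  have c3 : Continuous fun y : ℝ × EuclideanSpace ℝ (Fin d) =>
      ‖(WithLp.toLp 2 (y.1, y.2) : Et d) - z‖ := (hc.sub continuous_const).norm
  have e1 := (c1.tendsto (z.fst, z.snd)).eventually (gt_mem_nhds h1)
  have e2 := (c2.tendsto (z.fst, z.snd)).eventually (gt_mem_nhds h2)
  have e3 := (c3.tendsto (z.fst, z.snd)).eventually (gt_mem_nhds (show _ < r' by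
    have : (WithLp.toLp 2 (z.fst, z.snd) : Et d) - z = 0 := sub_self _
    rw [this, norm_zero]; exact hr'))
  filter_upwards [mem_nhdsWithin_of_mem_nhds e1, mem_nhdsWithin_of_mem_nhds e2,
    mem_nhdsWithin_of_mem_nhds e3, self_mem_nhdsWithin] with y y1 y2 y3 y4
  exact ⟨⟨y4.1, y4.2, le_of_lt y1, le_of_lt y2⟩, le_of_lt y3⟩

section
variable {d : ℕ} {𝒪 : Set (EuclideanSpace ℝ (Fin d))} {T ρ : ℝ}
    {H : EuclideanSpace ℝ (Fin d) → EuclideanSpace ℝ (Fin d) →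
      Matrix (Fin d) (Fin d) ℝ → ℝ}

theorem jet_sub 
    (Hcont : Continuous (fun z : EuclideanSpace ℝ (Fin d) × EuclideanSpace ℝ (Fin d) ×
      Matrix (Fin d) (Fin d) ℝ => H z.1 z.2.1 z.2.2))
    {w₁ : ℝ → EuclideanSpace ℝ (Fin d) → ℝ}
    (hsub : ∀ (φ φt : ℝ → EuclideanSpace ℝ (Fin d) → ℝ)
      (Dφ : ℝ → EuclideanSpace ℝ (Fin d) → EuclideanSpace ℝ (Fin d))
      (D2φ : ℝ → EuclideanSpace ℝ (Fin d) → Matrix (Fin d) (Fin d) ℝ),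
      IsC12 d φ φt Dφ D2φ →
      ∀ t₀ ∈ Ico (0 : ℝ) T, ∀ x₀ ∈ closure 𝒪,
        IsLocalMaxOn (fun z : ℝ × EuclideanSpace ℝ (Fin d) => w₁ z.1 z.2 - φ z.1 z.2)
          (Icc 0 T ×ˢ closure 𝒪) (t₀, x₀) →
        ρ * w₁ t₀ x₀ - φt t₀ x₀ + H x₀ (Dφ t₀ x₀) (D2φ t₀ x₀) ≤ 0)
    {t : ℝ} {x : EuclideanSpace ℝ (Fin d)} {r : ℝ} {z p : Et d} {X : Et d →L[ℝ] Et d}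
    (hj : JetLim (fun z : Et d => w₁ z.fst z.snd) (Nb T (closure 𝒪) t x r) z p X)
    (hzT : z.fst < T) (h1 : |z.fst - t| < r) (h2 : ‖z.snd - x‖ < r) :
    ρ * w₁ z.fst z.snd - p.fst + H z.snd p.snd (xmat X) ≤ 0 := by
  obtain ⟨xs, ps, Xs, hK, hx, hu, hp, hX, hs, hq⟩ := hj
  have cf := (WithLp.fstL 2 ℝ ℝ (EuclideanSpace ℝ (Fin d))).continuous
  have cs := (WithLp.sndL 2 ℝ ℝ (EuclideanSpace ℝ (Fin d))).continuous
  have hxf : Tendsto (fun j => (xs j).fst) atTop (nhds z.fst) := (cf.tendsto z).comp hx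
  have hxs : Tendsto (fun j => (xs j).snd) atTop (nhds z.snd) := (cs.tendsto z).comp hx
  have hpf : Tendsto (fun j => (ps j).fst) atTop (nhds p.fst) := (cf.tendsto p).comp hp
  have hps : Tendsto (fun j => (ps j).snd) atTop (nhds p.snd) := (cs.tendsto p).comp hp
  have hXm : Tendsto (fun j => xmat (Xs j)) atTop (nhds (xmat X)) :=
    (xmat_continuous.tendsto X).comp hX
  have hH : Tendsto (fun j => H (xs j).snd (ps j).snd (xmat (Xs j))) atTop
      (nhds (H z.snd p.snd (xmat X))) :=
    (Hcont.tendsto (z.snd, p.snd, xmat X)).comp (hxs.prodMk_nhds (hps.prodMk_nhds hXm))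
  have hlim := ((hu.const_mul ρ).sub hpf).add hH
  refine le_of_tendsto hlim ?_
  filter_upwards [hxf.eventually (gt_mem_nhds hzT),
    ((hxf.sub_const t).abs).eventually (gt_mem_nhds h1),
    ((hxs.sub_const x).norm).eventually (gt_mem_nhds h2)] with j a1 a2 a3
  obtain ⟨r', hr', hq'⟩ := hq j
  have key := hsub _ _ _ _ (quad_C12 (xs j) (ps j) (Xs j) (hs j)) (xs j).fst
    ⟨(hK j).1.1, a1⟩ (xs j).snd (hK j).2.1 (by
      filter_upwards [jet_nhds a2 a3 hr'] with y hy
      have := hq' _ hy.1 hy.2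
      have e : (WithLp.toLp 2 ((xs j).fst, (xs j).snd) : Et d) - xs j = 0 := sub_self _
      simp only [quadF, e, map_zero, inner_zero_right, mul_zero, add_zero, sub_zero]
      change w₁ y.1 y.2 ≤ w₁ (xs j).fst (xs j).snd + _ + _ at this
      linarith)
  have e : (WithLp.toLp 2 ((xs j).fst, (xs j).snd) : Et d) - xs j = 0 := sub_self _
  simp only [e, map_zero, add_zero] at key
  exact key

theorem jet_super
    (Hcont : Continuous (fun z : EuclideanSpace ℝ (Fin d) × EuclideanSpace ℝ (Fin d) ×
      Matrix (Fin d) (Fin d) ℝ => H z.1 z.2.1 z.2.2)) (h𝒪 : IsOpen 𝒪)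
    {w₂ : ℝ → EuclideanSpace ℝ (Fin d) → ℝ}
    (hsuper : ∀ (φ φt : ℝ → EuclideanSpace ℝ (Fin d) → ℝ)
      (Dφ : ℝ → EuclideanSpace ℝ (Fin d) → EuclideanSpace ℝ (Fin d))
      (D2φ : ℝ → EuclideanSpace ℝ (Fin d) → Matrix (Fin d) (Fin d) ℝ),
      IsC12 d φ φt Dφ D2φ →
      ∀ t₀ ∈ Ico (0 : ℝ) T, ∀ x₀ ∈ 𝒪,
        IsLocalMinOn (fun z : ℝ × EuclideanSpace ℝ (Fin d) => w₂ z.1 z.2 - φ z.1 z.2)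
          (Icc 0 T ×ˢ 𝒪) (t₀, x₀) →
        0 ≤ ρ * w₂ t₀ x₀ - φt t₀ x₀ + H x₀ (Dφ t₀ x₀) (D2φ t₀ x₀))
    {t : ℝ} {x : EuclideanSpace ℝ (Fin d)} {r : ℝ} {z p : Et d} {X : Et d →L[ℝ] Et d}
    (hj : JetLim (fun z : Et d => - w₂ z.fst z.snd) (Nb T (closure 𝒪) t x r) z p X)
    (hzT : z.fst < T) (hz : z.snd ∈ 𝒪) (h1 : |z.fst - t| < r) (h2 : ‖z.snd - x‖ < r) :
    0 ≤ ρ * w₂ z.fst z.snd + p.fst + H z.snd (-p.snd) (-xmat X) := by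
  obtain ⟨xs, ps, Xs, hK, hx, hu, hp, hX, hs, hq⟩ := hj
  have cf := (WithLp.fstL 2 ℝ ℝ (EuclideanSpace ℝ (Fin d))).continuous
  have cs := (WithLp.sndL 2 ℝ ℝ (EuclideanSpace ℝ (Fin d))).continuous
  have hxf : Tendsto (fun j => (xs j).fst) atTop (nhds z.fst) := (cf.tendsto z).comp hx
  have hxs : Tendsto (fun j => (xs j).snd) atTop (nhds z.snd) := (cs.tendsto z).comp hx
  have hpf : Tendsto (fun j => (ps j).fst) atTop (nhds p.fst) := (cf.tendsto p).comp hp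
  have hps : Tendsto (fun j => -(ps j).snd) atTop (nhds (-p.snd)) := ((cs.tendsto p).comp hp).neg
  have hXm : Tendsto (fun j => -xmat (Xs j)) atTop (nhds (-xmat X)) :=
    ((xmat_continuous.tendsto X).comp hX).neg
  have hH : Tendsto (fun j => H (xs j).snd (-(ps j).snd) (-xmat (Xs j))) atTop
      (nhds (H z.snd (-p.snd) (-xmat X))) :=
    (Hcont.tendsto (z.snd, -p.snd, -xmat X)).comp (hxs.prodMk_nhds (hps.prodMk_nhds hXm))
  have hlim := ((hu.neg.const_mul ρ).add hpf).add hH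
  simp only [neg_neg] at hlim
  refine ge_of_tendsto hlim ?_
  filter_upwards [hxf.eventually (gt_mem_nhds hzT), hxs.eventually (h𝒪.mem_nhds hz),
    ((hxf.sub_const t).abs).eventually (gt_mem_nhds h1),
    ((hxs.sub_const x).norm).eventually (gt_mem_nhds h2)] with j a1 a0 a2 a3
  obtain ⟨r', hr', hq'⟩ := hq j
  have key := hsuper _ _ _ _ (quad_C12 (xs j) (-ps j) (-Xs j) (fun a b => by
      simp only [neg_apply, inner_neg_left, inner_neg_right, hs])) (xs j).fst
    ⟨(hK j).1.1, a1⟩ (xs j).snd a0 (by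
      refine Filter.Eventually.filter_mono
        (nhdsWithin_mono _ (Set.prod_mono le_rfl subset_closure)) ?_
      filter_upwards [jet_nhds a2 a3 hr'] with y hy
      have := hq' _ hy.1 hy.2
      have e : (WithLp.toLp 2 ((xs j).fst, (xs j).snd) : Et d) - xs j = 0 := sub_self _
      simp only [quadF, e, map_zero, inner_zero_right, mul_zero, add_zero, sub_zero, neg_apply,
        inner_neg_left]
      change -w₂ y.1 y.2 ≤ -w₂ (xs j).fst (xs j).snd + _ + _ at this
      linarith)
  have e : (WithLp.toLp 2 ((xs j).fst, (xs j).snd) : Et d) - xs j = 0 := sub_self _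
  simp only [e, map_zero, add_zero] at key
  have ex : xmat (-Xs j) = - xmat (Xs j) := rfl
  have ef : (-ps j).fst = -(ps j).fst := rfl
  have es : (-ps j).snd = -(ps j).snd := rfl
  rw [ex, ef, es, sub_neg_eq_add] at key
  exact key
end

/-- Diagonal operator: `2K` in time and `2c` in space. -/
def Rop (d : ℕ) (K c : ℝ) : Et d →L[ℝ] Et d :=
  (WithLp.prodContinuousLinearEquiv 2 ℝ ℝ (EuclideanSpace ℝ (Fin d))).symm.toContinuousLinearMap.comp
    ((((2 * K) • ContinuousLinearMap.id ℝ ℝ).prodMap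
      ((2 * c) • ContinuousLinearMap.id ℝ (EuclideanSpace ℝ (Fin d)))).comp
    (WithLp.prodContinuousLinearEquiv 2 ℝ ℝ (EuclideanSpace ℝ (Fin d))).toContinuousLinearMap)

theorem Rop_apply {d : ℕ} (K c : ℝ) (z : Et d) :
    Rop d K c z = WithLp.toLp 2 (2 * K * z.fst, (2 * c) • z.snd) := rfl

theorem Rop_symm {d : ℕ} (K c : ℝ) (a b : Et d) :
    inner ℝ (Rop d K c a) b = inner ℝ a (Rop d K c b) := by
  rw [Rop_apply, Rop_apply, WithLp.prod_inner_apply, WithLp.prod_inner_apply]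
  simp [inner_smul_left, inner_smul_right]
  ring

/-- The operator used in the theorem on sums. -/
def Aop {E : Type*} [NormedAddCommGroup E] [InnerProductSpace ℝ E] (s : ℝ) (R : E →L[ℝ] E) :
    WithLp 2 (E × E) →L[ℝ] WithLp 2 (E × E) :=
  (inj1 E).comp (s • (prj1 E - prj2 E) + R.comp (prj1 E)) - (inj2 E).comp (s • (prj1 E - prj2 E))

section
variable {E : Type*} [NormedAddCommGroup E] [InnerProductSpace ℝ E]
theorem Aop_apply (s : ℝ) (R : E →L[ℝ] E) (h k : E) :
    Aop s R (WithLp.toLp 2 (h, k)) = WithLp.toLp 2 (s • (h - k) + R h, -(s • (h - k))) := by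
  refine WithLp.ofLp_injective 2 (Prod.ext ?_ ?_) <;>
    simp [Aop, inj1_apply, inj2_apply, prj1_apply, prj2_apply]

theorem Aop_inner (s : ℝ) (R : E →L[ℝ] E) (h k h' k' : E) :
    inner ℝ (Aop s R (WithLp.toLp 2 (h, k))) (WithLp.toLp 2 (h', k')) =
      s * inner ℝ (h - k) (h' - k') + inner ℝ (R h) h' := by
  rw [Aop_apply, WithLp.prod_inner_apply]
  simp only [inner_add_left, inner_neg_left, inner_smul_left, conj_trivial, inner_sub_right]
  ring

theorem Aop_symm (s : ℝ) (R : E →L[ℝ] E) (hR : ∀ a b, inner ℝ (R a) b = inner ℝ a (R b))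
    (a b : WithLp 2 (E × E)) : inner ℝ (Aop s R a) b = inner ℝ a (Aop s R b) := by
  have h1 := Aop_inner s R a.fst a.snd b.fst b.snd
  have h2 := Aop_inner s R b.fst b.snd a.fst a.snd
  have h3 := real_inner_comm (a.fst - a.snd) (b.fst - b.snd)
  have h4 := hR a.fst b.fst
  have h5 := real_inner_comm a.fst (R b.fst)
  have h6 : inner ℝ (Aop s R a) b = inner ℝ (Aop s R b) a := by
    change inner ℝ (Aop s R a) b = _ at h1
    change inner ℝ (Aop s R b) a = _ at h2
    rw [h1, h2, h4, h3, h5]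
  rw [h6, real_inner_comm]

theorem Aop_norm (s : ℝ) (R : E →L[ℝ] E) (h k : E) :
    ‖Aop s R (WithLp.toLp 2 (h, k))‖ ^ 2 = ‖s • (h - k) + R h‖ ^ 2 + ‖s • (h - k)‖ ^ 2 := by
  rw [Aop_apply, WithLp.prod_norm_sq_eq_of_L2]
  simp
end

theorem xmat_symm {d : ℕ} (X : Et d →L[ℝ] Et d) (hX : ∀ a b, inner ℝ (X a) b = inner ℝ a (X b)) :
    (xmat X).IsHermitian := by
  ext i j
  have h := hX (spL d (EuclideanSpace.single i 1)) (spL d (EuclideanSpace.single j 1))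
  rw [spL_apply, spL_apply, WithLp.prod_inner_apply, WithLp.prod_inner_apply] at h
  simp only [inner_zero_right, inner_zero_left, zero_add] at h
  rw [EuclideanSpace.inner_single_right, EuclideanSpace.inner_single_left] at h
  simpa [xmat] using h

theorem xmat_quad {d : ℕ} (X : Et d →L[ℝ] Et d) (h : EuclideanSpace ℝ (Fin d)) :
    dotProduct (h : Fin d → ℝ) ((xmat X).mulVec h) = inner ℝ (X (spL d h)) (spL d h) := by
  have : (xmat X).mulVec h = ((X (spL d h)).snd : Fin d → ℝ) := by
    ext i; rw [xmat_apply]; rfl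
  rw [this, WithLp.prod_inner_apply, spL_apply]
  simp [PiLp.inner_apply, dotProduct]

theorem An_mulVec {d : ℕ} (n c : ℝ) (h k : EuclideanSpace ℝ (Fin d)) :
    (An d n (Matrix.fromBlocks ((2 * c) • (1 : Matrix (Fin d) (Fin d) ℝ)) 0 0 0)).mulVec
      (Sum.elim (h : Fin d → ℝ) k) =
    Sum.elim ((n ^ 2 • (h - k) + (2 * c) • h : EuclideanSpace ℝ (Fin d)) : Fin d → ℝ)
      ((-(n ^ 2 • (h - k)) : EuclideanSpace ℝ (Fin d)) : Fin d → ℝ) := by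
  rw [An, Matrix.add_mulVec, Matrix.smul_mulVec, Matrix.fromBlocks_mulVec, Matrix.fromBlocks_mulVec]
  ext i
  rcases i with i | i <;> simp [Matrix.neg_mulVec, Matrix.smul_mulVec, -mul_eq_mul_left_iff] <;> ring

theorem An_herm {d : ℕ} (n c : ℝ) :
    (An d n (Matrix.fromBlocks ((2 * c) • (1 : Matrix (Fin d) (Fin d) ℝ)) 0 0 0)).IsHermitian := by
  rw [An, Matrix.IsHermitian]
  simp [Matrix.fromBlocks_transpose]

theorem dot_elim {d : ℕ} (h k h' k' : EuclideanSpace ℝ (Fin d)) :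
    dotProduct (Sum.elim (h : Fin d → ℝ) (k : Fin d → ℝ)) (Sum.elim (h' : Fin d → ℝ) (k' : Fin d → ℝ)) =
      inner ℝ h h' + inner ℝ k k' := by
  simp [dotProduct, PiLp.inner_apply, mul_comm]

theorem psd_of {d : ℕ} (n c K η : ℝ) (X Y : Et d →L[ℝ] Et d)
    (hX : ∀ a b, inner ℝ (X a) b = inner ℝ a (X b)) (hY : ∀ a b, inner ℝ (Y a) b = inner ℝ a (Y b))
    (hXY : ∀ h k : Et d, inner ℝ (X h) h + inner ℝ (Y k) k ≤
        inner ℝ (Aop (n ^ 2) (Rop d K c) (WithLp.toLp 2 (h, k))) (WithLp.toLp 2 (h, k)) +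
          η * ‖Aop (n ^ 2) (Rop d K c) (WithLp.toLp 2 (h, k))‖ ^ 2) :
    (An d n (Matrix.fromBlocks ((2 * c) • (1 : Matrix (Fin d) (Fin d) ℝ)) 0 0 0) +
      η • (An d n (Matrix.fromBlocks ((2 * c) • (1 : Matrix (Fin d) (Fin d) ℝ)) 0 0 0) *
        An d n (Matrix.fromBlocks ((2 * c) • (1 : Matrix (Fin d) (Fin d) ℝ)) 0 0 0)) -
      Matrix.fromBlocks (xmat X) 0 0 (-(-xmat Y))).PosSemidef := by
  set A := An d n (Matrix.fromBlocks ((2 * c) • (1 : Matrix (Fin d) (Fin d) ℝ)) 0 0 0) with hA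
  have hAh : A.IsHermitian := An_herm n c
  rw [neg_neg]
  refine Matrix.PosSemidef.of_dotProduct_mulVec_nonneg ?_ ?_
  · refine (hAh.add ?_).sub ?_
    · rw [Matrix.IsHermitian, Matrix.conjTranspose_smul, Matrix.conjTranspose_mul, hAh.eq]
      simp
    · exact Matrix.IsHermitian.fromBlocks (xmat_symm X hX) (by simp) (xmat_symm Y hY)
  · intro v
    let h : EuclideanSpace ℝ (Fin d) := WithLp.toLp 2 (v ∘ Sum.inl)
    let k : EuclideanSpace ℝ (Fin d) := WithLp.toLp 2 (v ∘ Sum.inr)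
    have hv : v = Sum.elim (h : Fin d → ℝ) (k : Fin d → ℝ) := (Sum.elim_comp_inl_inr v).symm
    have hm := An_mulVec n c h k
    rw [← hA] at hm
    have key := hXY (spL d h) (spL d k)
    rw [Aop_inner, Aop_norm] at key
    have e1 : dotProduct v (A.mulVec v) = n ^ 2 * inner ℝ (h - k) (h - k) + 2 * c * inner ℝ h h := by
      rw [hv, hm, dot_elim]
      simp only [inner_add_right, inner_smul_right, inner_neg_right, inner_sub_left, inner_sub_right]
      ring
    have e2 : dotProduct v ((A * A).mulVec v) =
        ‖n ^ 2 • (h - k) + (2 * c) • h‖ ^ 2 + ‖n ^ 2 • (h - k)‖ ^ 2 := by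
      have hAt : A.transpose = A := by
        have := hAh.eq
        rwa [Matrix.conjTranspose_eq_transpose_of_trivial] at this
      rw [← Matrix.mulVec_mulVec, Matrix.dotProduct_mulVec, ← Matrix.mulVec_transpose, hAt, hv, hm, dot_elim]
      rw [real_inner_self_eq_norm_sq, real_inner_self_eq_norm_sq, norm_neg]
    have e3 : dotProduct v ((Matrix.fromBlocks (xmat X) 0 0 (xmat Y)).mulVec v) =
        inner ℝ (X (spL d h)) (spL d h) + inner ℝ (Y (spL d k)) (spL d k) := by
      rw [← xmat_quad, ← xmat_quad]
      conv_lhs => rw [hv, Matrix.fromBlocks_mulVec]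
      simp [dotProduct]
    have r1 : Rop d K c (spL d h) = spL d ((2 * c) • h) := by
      rw [Rop_apply, spL_apply, spL_apply]; simp
    have r2 : ∀ a b : EuclideanSpace ℝ (Fin d), inner ℝ (spL d a) (spL d b) = inner ℝ a b := by
      intro a b; rw [spL_apply, spL_apply, WithLp.prod_inner_apply]; simp
    have r3 : ∀ a : EuclideanSpace ℝ (Fin d), ‖spL d a‖ = ‖a‖ := by
      intro a
      rw [← sq_eq_sq₀ (norm_nonneg _) (norm_nonneg _), ← real_inner_self_eq_norm_sq,
        ← real_inner_self_eq_norm_sq, r2]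
    rw [r1, ← map_sub, ← map_smul, ← map_add, r2, r2, r3, r3, inner_smul_left, conj_trivial] at key
    rw [star_trivial, Matrix.sub_mulVec, Matrix.add_mulVec, Matrix.smul_mulVec, dotProduct_sub, dotProduct_add,
      dotProduct_smul, e1, e2, e3, smul_eq_mul]
    linarith

theorem Q_norm {d : ℕ} {c : ℝ} (hc : 0 ≤ c) :
    ‖Matrix.fromBlocks ((2 * c) • (1 : Matrix (Fin d) (Fin d) ℝ)) 0 0
      (0 : Matrix (Fin d) (Fin d) ℝ)‖ ≤ 2 * c := by
  rw [Matrix.norm_le_iff (by positivity)]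
  rintro (i | i) (j | j) <;> simp [Matrix.one_apply, hc]
  split_ifs <;> simp [abs_of_nonneg hc, hc]

/-- Assumption A.1 with a fixed constant. -/
def A1body (d : ℕ) (𝒪 : Set (EuclideanSpace ℝ (Fin d)))
    (H : EuclideanSpace ℝ (Fin d) → EuclideanSpace ℝ (Fin d) →
      Matrix (Fin d) (Fin d) ℝ → ℝ) (α : ℝ) : Prop :=
  ∀ x ∈ closure 𝒪, ∀ y ∈ closure 𝒪, ‖x - y‖ ≤ 1 →
    ∀ (p q : EuclideanSpace ℝ (Fin d)) (Q : Matrix (Fin d ⊕ Fin d) (Fin d ⊕ Fin d) ℝ)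
      (Xη Yη : ℝ → Matrix (Fin d) (Fin d) ℝ) (n : ℝ), 1 ≤ n →
      (∀ η > (0 : ℝ),
        (An d n Q + η • (An d n Q * An d n Q) -
          Matrix.fromBlocks (Xη η) 0 0 (-(Yη η))).PosSemidef) →
      liminf (fun η : ℝ => ((H y q (Yη η) - H x p (Xη η) : ℝ) : EReal))
          (nhdsWithin 0 (Ioi 0)) ≤
        ((α * (‖x - y‖ * (1 + ‖q‖ + n ^ 2 * ‖x - y‖) + (1 + ‖x‖) * ‖p - q‖ +
          (1 + ‖x‖ ^ 2) * ‖Q‖) : ℝ) : EReal)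

/-- Subsolution property. -/
def SubSol (d : ℕ) (𝒪 : Set (EuclideanSpace ℝ (Fin d))) (T ρ : ℝ)
    (H : EuclideanSpace ℝ (Fin d) → EuclideanSpace ℝ (Fin d) → Matrix (Fin d) (Fin d) ℝ → ℝ)
    (w₁ : ℝ → EuclideanSpace ℝ (Fin d) → ℝ) : Prop :=
  ∀ (φ φt : ℝ → EuclideanSpace ℝ (Fin d) → ℝ)
      (Dφ : ℝ → EuclideanSpace ℝ (Fin d) → EuclideanSpace ℝ (Fin d))
      (D2φ : ℝ → EuclideanSpace ℝ (Fin d) → Matrix (Fin d) (Fin d) ℝ),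
      IsC12 d φ φt Dφ D2φ →
      ∀ t₀ ∈ Ico (0 : ℝ) T, ∀ x₀ ∈ closure 𝒪,
        IsLocalMaxOn (fun z : ℝ × EuclideanSpace ℝ (Fin d) => w₁ z.1 z.2 - φ z.1 z.2)
          (Icc 0 T ×ˢ closure 𝒪) (t₀, x₀) →
        ρ * w₁ t₀ x₀ - φt t₀ x₀ + H x₀ (Dφ t₀ x₀) (D2φ t₀ x₀) ≤ 0

/-- Supersolution property. -/
def SuperSol (d : ℕ) (𝒪 : Set (EuclideanSpace ℝ (Fin d))) (T ρ : ℝ)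
    (H : EuclideanSpace ℝ (Fin d) → EuclideanSpace ℝ (Fin d) → Matrix (Fin d) (Fin d) ℝ → ℝ)
    (w₂ : ℝ → EuclideanSpace ℝ (Fin d) → ℝ) : Prop :=
  ∀ (φ φt : ℝ → EuclideanSpace ℝ (Fin d) → ℝ)
      (Dφ : ℝ → EuclideanSpace ℝ (Fin d) → EuclideanSpace ℝ (Fin d))
      (D2φ : ℝ → EuclideanSpace ℝ (Fin d) → Matrix (Fin d) (Fin d) ℝ),
      IsC12 d φ φt Dφ D2φ →
      ∀ t₀ ∈ Ico (0 : ℝ) T, ∀ x₀ ∈ 𝒪,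
        IsLocalMinOn (fun z : ℝ × EuclideanSpace ℝ (Fin d) => w₂ z.1 z.2 - φ z.1 z.2)
          (Icc 0 T ×ˢ 𝒪) (t₀, x₀) →
        0 ≤ ρ * w₂ t₀ x₀ - φt t₀ x₀ + H x₀ (Dφ t₀ x₀) (D2φ t₀ x₀)

theorem quadF_add {d : ℕ} (z₀ p : Et d) (X : Et d →L[ℝ] Et d)
    (hX : ∀ a b, inner ℝ (X a) b = inner ℝ a (X b)) (z h : Et d) :
    quadF z₀ p X (z + h) = quadF z₀ p X z + inner ℝ (p + X (z - z₀)) h + 1 / 2 * inner ℝ (X h) h := by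
  have e : z + h - z₀ = (z - z₀) + h := by abel
  simp only [quadF, e, inner_add_left, inner_add_right, map_add]
  have e1 := hX h (z - z₀)
  have e2 := real_inner_comm h (X (z - z₀))
  linarith

theorem Nb_compact {d : ℕ} (T : ℝ) {D : Set (EuclideanSpace ℝ (Fin d))} (hD : IsClosed D) (t : ℝ)
    (x : EuclideanSpace ℝ (Fin d)) (r : ℝ) : IsCompact (Nb T D t x r) := by
  have h1 : IsCompact ((Icc 0 T ∩ {s : ℝ | |s - t| ≤ r}) ×ˢ (D ∩ Metric.closedBall x r)) :=
    (isCompact_Icc.inter_right (isClosed_le (by fun_prop) (by fun_prop))).prod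
      ((isCompact_closedBall x r).inter_left hD)
  have h2 := h1.image (WithLp.prod_continuous_toLp 2 ℝ (EuclideanSpace ℝ (Fin d)))
  convert h2 using 1
  ext z
  constructor
  · rintro ⟨a, b, c, e⟩
    exact ⟨(z.fst, z.snd), ⟨⟨a, c⟩, b, by rwa [Metric.mem_closedBall, dist_eq_norm]⟩, rfl⟩
  · rintro ⟨y, ⟨⟨a, c⟩, b, e⟩, rfl⟩
    rw [Metric.mem_closedBall, dist_eq_norm] at e
    exact ⟨a, b, c, e⟩

theorem usc_Et {d : ℕ} {T : ℝ} {D : Set (EuclideanSpace ℝ (Fin d))} {t : ℝ}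
    {x : EuclideanSpace ℝ (Fin d)} {r : ℝ} {w : ℝ → EuclideanSpace ℝ (Fin d) → ℝ}
    (hw : UpperSemicontinuousOn (fun z : ℝ × EuclideanSpace ℝ (Fin d) => w z.1 z.2) (Icc 0 T ×ˢ D)) :
    UpperSemicontinuousOn (fun z : Et d => w z.fst z.snd) (Nb T D t x r) := by
  intro z hz a ha
  have := hw (z.fst, z.snd) ⟨hz.1, hz.2.1⟩ a ha
  have hc : Tendsto (fun y : Et d => (y.fst, y.snd)) (nhdsWithin z (Nb T D t x r))
      (nhdsWithin (z.fst, z.snd) (Icc 0 T ×ˢ D)) :=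
    tendsto_nhdsWithin_iff.mpr
      ⟨((WithLp.prod_continuous_ofLp 2 ℝ (EuclideanSpace ℝ (Fin d))).tendsto z).mono_left
        nhdsWithin_le_nhds, eventually_mem_nhdsWithin.mono fun y hy => ⟨hy.1, hy.2.1⟩⟩
  exact hc.eventually this

theorem sums_apply {d : ℕ} {𝒪 : Set (EuclideanSpace ℝ (Fin d))} {T ρ : ℝ}
    {H : EuclideanSpace ℝ (Fin d) → EuclideanSpace ℝ (Fin d) → Matrix (Fin d) (Fin d) ℝ → ℝ}
    (Hcont : Continuous (fun z : EuclideanSpace ℝ (Fin d) × EuclideanSpace ℝ (Fin d) ×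
      Matrix (Fin d) (Fin d) ℝ => H z.1 z.2.1 z.2.2)) (h𝒪 : IsOpen 𝒪) {α : ℝ} (hα : 0 < α)
    (HA : A1body d 𝒪 H α)
    {w₁ w₂ : ℝ → EuclideanSpace ℝ (Fin d) → ℝ} (hsub : SubSol d 𝒪 T ρ H w₁)
    (hsuper : SuperSol d 𝒪 T ρ H w₂) {t : ℝ} {x : EuclideanSpace ℝ (Fin d)} {r : ℝ}
    (hu : UpperSemicontinuousOn (fun z : Et d => w₁ z.fst z.snd) (Nb T (closure 𝒪) t x r))
    (hv : UpperSemicontinuousOn (fun z : Et d => - w₂ z.fst z.snd) (Nb T (closure 𝒪) t x r))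
    {K c : ℝ} (hc : 0 ≤ c) {n : ℝ} (hn : 1 ≤ n) {z₀ π e z z' : Et d}
    (hz : z ∈ Nb T (closure 𝒪) t x r) (hz' : z' ∈ Nb T (closure 𝒪) t x r)
    (hmax : ∀ ζ ∈ Nb T (closure 𝒪) t x r, ∀ ζ' ∈ Nb T (closure 𝒪) t x r,
      w₁ ζ.fst ζ.snd - w₂ ζ'.fst ζ'.snd - quadF z₀ π (Rop d K c) ζ - n ^ 2 / 2 * ‖ζ - ζ' + e‖ ^ 2 ≤
      w₁ z.fst z.snd - w₂ z'.fst z'.snd - quadF z₀ π (Rop d K c) z - n ^ 2 / 2 * ‖z - z' + e‖ ^ 2)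
    (hzT : z.fst < T) (h1 : |z.fst - t| < r) (h2 : ‖z.snd - x‖ < r)
    (hzT' : z'.fst < T) (h1' : |z'.fst - t| < r) (h2' : ‖z'.snd - x‖ < r) (hO : z'.snd ∈ 𝒪)
    (hzz : ‖z.snd - z'.snd‖ ≤ 1) :
    ρ * (w₁ z.fst z.snd - w₂ z'.fst z'.snd) - (π + Rop d K c (z - z₀)).fst ≤
      α * (‖z.snd - z'.snd‖ * (1 + ‖n ^ 2 • (z.snd - z'.snd + e.snd)‖ + n ^ 2 * ‖z.snd - z'.snd‖) +
        (1 + ‖z.snd‖) * ‖(π + Rop d K c (z - z₀)).snd‖ + (1 + ‖z.snd‖ ^ 2) * (2 * c)) := by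
  have hKc : IsCompact (Nb T (closure 𝒪) t x r) := Nb_compact T isClosed_closure t x r
  set g : Et d := n ^ 2 • (z - z' + e) with hg
  have S : ∀ η : ℝ, 0 < η → _ := fun η hη => sums hKc hKc hu hv (x := z) (y := z')
    (p := (π + Rop d K c (z - z₀)) + g) (q := -g) hz hz' (Aop (n ^ 2) (Rop d K c))
    (Aop_symm _ _ (Rop_symm K c)) (by
      intro h k hh hk
      have := hmax _ hh _ hk
      rw [quadF_add _ _ _ (Rop_symm K c)] at this
      have e1 : z + h - (z' + k) + e = (z - z' + e) + (h - k) := by abel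
      have e2 : ‖z + h - (z' + k) + e‖ ^ 2 =
          ‖z - z' + e‖ ^ 2 + 2 * inner ℝ (z - z' + e) (h - k) + ‖h - k‖ ^ 2 := by
        rw [e1, norm_add_sq_real]
      rw [e2] at this
      rw [Aop_inner, real_inner_self_eq_norm_sq, hg]
      rw [inner_add_left (π + Rop d K c (z - z₀)), inner_neg_left, inner_smul_left, inner_smul_left,
        conj_trivial]
      rw [inner_sub_right] at this
      linarith) hη
  choose! X Y hX hY hXY hJ1 hJ2 using S
  have key : ∀ η > 0, ρ * (w₁ z.fst z.snd - w₂ z'.fst z'.snd) - (π + Rop d K c (z - z₀)).fst ≤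
      H z'.snd g.snd (-xmat (Y η)) -
        H z.snd ((π + Rop d K c (z - z₀)) + g).snd (xmat (X η)) := by
    intro η hη
    have a1 := jet_sub Hcont hsub (hJ1 η hη) hzT h1 h2
    have a2 := jet_super Hcont h𝒪 hsuper (hJ2 η hη) hzT' hO h1' h2'
    have e1 : (-g).snd = -g.snd := rfl
    have e2 : (-g).fst = -g.fst := rfl
    have e3 : ((π + Rop d K c (z - z₀)) + g).fst = (π + Rop d K c (z - z₀)).fst + g.fst := rfl
    rw [e1, e2, neg_neg] at a2
    rw [e3] at a1
    linarith
  have hL := HA z.snd hz.2.1 z'.snd hz'.2.1 hzz ((π + Rop d K c (z - z₀)) + g).snd g.snd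
    (Matrix.fromBlocks ((2 * c) • (1 : Matrix (Fin d) (Fin d) ℝ)) 0 0 0)
    (fun η => xmat (X η)) (fun η => -xmat (Y η)) n hn (fun η hη =>
      psd_of n c K η (X η) (Y η) (hX η hη) (hY η hη) (hXY η hη))
  have hge : ((ρ * (w₁ z.fst z.snd - w₂ z'.fst z'.snd) - (π + Rop d K c (z - z₀)).fst : ℝ) : EReal) ≤
      liminf (fun η : ℝ => ((H z'.snd g.snd (-xmat (Y η)) -
        H z.snd ((π + Rop d K c (z - z₀)) + g).snd (xmat (X η)) : ℝ) : EReal))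
        (nhdsWithin 0 (Ioi 0)) := by
    refine le_liminf_of_le (by isBoundedDefault) ?_
    filter_upwards [self_mem_nhdsWithin] with η hη
    exact EReal.coe_le_coe_iff.2 (key η hη)
  have hfin := EReal.coe_le_coe_iff.1 (hge.trans hL)
  refine hfin.trans ?_
  have e4 : ((π + Rop d K c (z - z₀)) + g).snd - g.snd = (π + Rop d K c (z - z₀)).snd := by
    show (π + Rop d K c (z - z₀)).snd + g.snd - g.snd = _
    abel
  rw [e4]
  have e5 : g.snd = n ^ 2 • (z.snd - z'.snd + e.snd) := rfl
  rw [e5]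
  have hQ := Q_norm (d := d) hc
  gcongr

theorem usc_tendsto {X ι : Type*} [TopologicalSpace X] {N : Set X} {G : X → ℝ}
    (hG : UpperSemicontinuousOn G N) {y : X} (hy : y ∈ N) {l : Filter ι} {f : ι → X}
    (hf : Tendsto f l (nhds y)) (hfN : ∀ i, f i ∈ N) {b : ℝ} (hb : G y < b) :
    ∀ᶠ i in l, G (f i) < b := by
  have h1 := hG y hy b hb
  have h2 : Tendsto f l (nhdsWithin y N) :=
    tendsto_nhdsWithin_iff.mpr ⟨hf, Eventually.of_forall hfN⟩
  exact h2.eventually h1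

theorem doubling {E : Type*} [NormedAddCommGroup E] {N : Set E} (hN : IsCompact N)
    {G : E × E → ℝ} (hG : UpperSemicontinuousOn G (N ×ˢ N)) {z₀ : E} (hz₀ : z₀ ∈ N)
    (hstrict : ∀ ζ ∈ N, ζ ≠ z₀ → G (ζ, ζ) < G (z₀, z₀)) {𝓕 : Filter ℝ}
    (h𝓕 : 𝓕 ≤ nhdsWithin 0 (Ioi 0)) {e : ℝ → E} (he : Tendsto e 𝓕 (nhds 0))
    (heN : ∀ᶠ ε in 𝓕, z₀ + e ε ∈ N)
    (hGe : Tendsto (fun ε => G (z₀, z₀ + e ε)) 𝓕 (nhds (G (z₀, z₀)))) {κ : ℝ} (hκ : 0 < κ) :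
    ∃ z z' : ℝ → E, (∀ ε, z ε ∈ N) ∧ (∀ ε, z' ε ∈ N) ∧
      (∀ ε, ∀ ζ ∈ N, ∀ ζ' ∈ N, G (ζ, ζ') - κ / ε ^ 2 / 2 * ‖ζ - ζ' + e ε‖ ^ 2 ≤
        G (z ε, z' ε) - κ / ε ^ 2 / 2 * ‖z ε - z' ε + e ε‖ ^ 2) ∧
      Tendsto z 𝓕 (nhds z₀) ∧ Tendsto z' 𝓕 (nhds z₀) ∧
      (∀ τ > 0, ∀ᶠ ε in 𝓕, ‖z ε - z' ε + e ε‖ ≤ τ * ε) ∧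
      ∀ᶠ ε in 𝓕, G (z₀, z₀ + e ε) ≤ G (z ε, z' ε) := by
  have hNN : IsCompact (N ×ˢ N) := hN.prod hN
  have hex : ∀ ε : ℝ, ∃ ζ ∈ N ×ˢ N, IsMaxOn (fun ζ : E × E =>
      G ζ + -(κ / ε ^ 2 / 2 * ‖ζ.1 - ζ.2 + e ε‖ ^ 2)) (N ×ˢ N) ζ := by
    intro ε
    refine UpperSemicontinuousOn.exists_isMaxOn ⟨(z₀, z₀), hz₀, hz₀⟩ hNN (hG.add ?_)
    apply ContinuousOn.upperSemicontinuousOn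
    fun_prop
  choose Z hZ1 hZ2 using hex
  have hmax : ∀ ε, ∀ ζ ∈ N, ∀ ζ' ∈ N, G (ζ, ζ') - κ / ε ^ 2 / 2 * ‖ζ - ζ' + e ε‖ ^ 2 ≤
        G ((Z ε).1, (Z ε).2) - κ / ε ^ 2 / 2 * ‖(Z ε).1 - (Z ε).2 + e ε‖ ^ 2 := by
    intro ε ζ hζ ζ' hζ'
    have := hZ2 ε (show (ζ, ζ') ∈ N ×ˢ N from ⟨hζ, hζ'⟩)
    simp only [mem_ofPred_eq] at this
    linarith
  have hpos : ∀ᶠ ε in 𝓕, (0 : ℝ) < ε := h𝓕 (eventually_mem_nhdsWithin)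
  have hε0 : Tendsto (fun ε : ℝ => ε) 𝓕 (nhds 0) :=
    tendsto_id.mono_left (h𝓕.trans nhdsWithin_le_nhds)
  have hlow : ∀ᶠ ε in 𝓕, G (z₀, z₀ + e ε) ≤
      G ((Z ε).1, (Z ε).2) - κ / ε ^ 2 / 2 * ‖(Z ε).1 - (Z ε).2 + e ε‖ ^ 2 := by
    filter_upwards [heN] with ε h
    have := hmax ε z₀ hz₀ _ h
    have e0 : z₀ - (z₀ + e ε) + e ε = 0 := by abel
    rw [e0] at this
    simpa using this
  obtain ⟨M, hM⟩ := UpperSemicontinuousOn.bddAbove_of_isCompact hNN hG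
  have hM' : ∀ ε, G ((Z ε).1, (Z ε).2) ≤ M := fun ε => hM ⟨Z ε, hZ1 ε, rfl⟩
  have hpen : ∀ b, (∀ᶠ ε in 𝓕, G ((Z ε).1, (Z ε).2) - G (z₀, z₀ + e ε) ≤ b) →
      ∀ᶠ ε in 𝓕, ‖(Z ε).1 - (Z ε).2 + e ε‖ ^ 2 ≤ 2 * b / κ * ε ^ 2 := by
    intro b hb
    filter_upwards [hb, hlow, hpos] with ε h1 h2 h3
    have h4 : κ / ε ^ 2 / 2 * ‖(Z ε).1 - (Z ε).2 + e ε‖ ^ 2 ≤ b := by linarith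
    have h5 : ‖(Z ε).1 - (Z ε).2 + e ε‖ ^ 2 =
        (κ / ε ^ 2 / 2 * ‖(Z ε).1 - (Z ε).2 + e ε‖ ^ 2) * (2 / κ * ε ^ 2) := by
      field_simp
    rw [h5]
    calc _ ≤ b * (2 / κ * ε ^ 2) := by gcongr
      _ = _ := by ring
  have hdiff : Tendsto (fun ε => (Z ε).1 - (Z ε).2 + e ε) 𝓕 (nhds 0) := by
    have h1 := hpen (M - (G (z₀, z₀) - 1)) (by
      filter_upwards [hGe.eventually (lt_mem_nhds (show G (z₀, z₀) - 1 < G (z₀, z₀) by linarith))]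
        with ε h
      linarith [hM' ε])
    have h2 : Tendsto (fun ε : ℝ => 2 * (M - (G (z₀, z₀) - 1)) / κ * ε ^ 2) 𝓕 (nhds 0) := by
      simpa using (hε0.pow 2).const_mul (2 * (M - (G (z₀, z₀) - 1)) / κ)
    have h3 : Tendsto (fun ε => ‖(Z ε).1 - (Z ε).2 + e ε‖ ^ 2) 𝓕 (nhds 0) :=
      squeeze_zero' (Eventually.of_forall fun _ => by positivity) h1 h2
    rw [tendsto_zero_iff_norm_tendsto_zero]
    have h4 := h3.sqrt
    simpa using h4
  have hdiff' : Tendsto (fun ε => (Z ε).2 - (Z ε).1) 𝓕 (nhds 0) := by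
    have := he.sub hdiff
    rw [sub_zero] at this
    refine this.congr fun ε => ?_
    abel
  have hz : Tendsto (fun ε => (Z ε).1) 𝓕 (nhds z₀) := by
    refine hN.tendsto_nhds_of_unique_mapClusterPt (Eventually.of_forall fun ε => (hZ1 ε).1) ?_
    intro y hy hcl
    by_contra hne
    have hne2 : (comap (fun ε => (Z ε).1) (nhds y) ⊓ 𝓕).NeBot :=
      neBot_inf_comap_iff_map'.2 hcl
    obtain ⟨b, hb1, hb2⟩ := exists_between (hstrict y hy hne)
    have t1 : Tendsto (fun ε => (Z ε).1) (comap (fun ε => (Z ε).1) (nhds y) ⊓ 𝓕) (nhds y) :=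
      tendsto_comap.mono_left inf_le_left
    have t2 : Tendsto (fun ε => (Z ε).2) (comap (fun ε => (Z ε).1) (nhds y) ⊓ 𝓕) (nhds y) := by
      have := t1.add (hdiff'.mono_left (inf_le_right (a := comap (fun ε => (Z ε).1) (nhds y))))
      rw [add_zero] at this
      refine this.congr fun ε => ?_
      abel
    have u1 := usc_tendsto hG (show (y, y) ∈ N ×ˢ N from ⟨hy, hy⟩) (t1.prodMk_nhds t2) hZ1 hb1
    have u2 : ∀ᶠ ε in comap (fun ε => (Z ε).1) (nhds y) ⊓ 𝓕, b < G (z₀, z₀ + e ε) :=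
      (hGe.eventually (lt_mem_nhds hb2)).filter_mono inf_le_right
    obtain ⟨ε, v1, v2, v3⟩ := (u1.and (u2.and (hlow.filter_mono inf_le_right))).exists
    have v4 : 0 ≤ κ / ε ^ 2 / 2 * ‖(Z ε).1 - (Z ε).2 + e ε‖ ^ 2 := by positivity
    linarith
  have hz' : Tendsto (fun ε => (Z ε).2) 𝓕 (nhds z₀) := by
    have := hz.add hdiff'
    rw [add_zero] at this
    refine this.congr fun ε => ?_
    abel
  refine ⟨fun ε => (Z ε).1, fun ε => (Z ε).2, fun ε => (hZ1 ε).1, fun ε => (hZ1 ε).2, hmax,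
    hz, hz', ?_, ?_⟩
  · intro τ hτ
    have hb : 0 < κ * τ ^ 2 / 2 := by positivity
    have h1 := hpen (κ * τ ^ 2 / 2) (by
      filter_upwards [hGe.eventually (lt_mem_nhds
          (show G (z₀, z₀) - κ * τ ^ 2 / 4 < G (z₀, z₀) by linarith)),
        usc_tendsto hG (show (z₀, z₀) ∈ N ×ˢ N from ⟨hz₀, hz₀⟩) (hz.prodMk_nhds hz') hZ1
          (show G (z₀, z₀) < G (z₀, z₀) + κ * τ ^ 2 / 4 by linarith)] with ε a1 a2
      linarith)
    filter_upwards [h1, hpos] with ε h2 h3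
    refine abs_le_of_sq_le_sq' (b := τ * ε) ?_ (by positivity) |>.2
    refine h2.trans (le_of_eq ?_)
    field_simp
  · filter_upwards [hlow] with ε h
    have v4 : 0 ≤ κ / ε ^ 2 / 2 * ‖(Z ε).1 - (Z ε).2 + e ε‖ ^ 2 := by positivity
    linarith

theorem core_pert {d : ℕ} {T : ℝ} {𝒪 : Set (EuclideanSpace ℝ (Fin d))} (h𝒪 : IsOpen 𝒪)
    {w : ℝ → EuclideanSpace ℝ (Fin d) → ℝ} (hR : ClassR d T 𝒪 w) {t : ℝ} (ht : t ∈ Ico 0 T)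
    {x : EuclideanSpace ℝ (Fin d)} (hx : x ∈ closure 𝒪) :
    ∃ (C0 : ℝ) (ℓ : ℝ → EuclideanSpace ℝ (Fin d)) (lam : ℝ → ℝ), 0 ≤ C0 ∧
      (∃ᶠ ε in nhdsWithin (0 : ℝ) (Ioi 0), ‖ℓ ε‖ ≤ C0 * ε) ∧
      (∀ ε > (0 : ℝ), 0 ≤ lam ε) ∧ Tendsto lam (nhdsWithin 0 (Ioi 0)) (nhds 0) ∧
      Tendsto (fun ε => w (t + lam ε) (x + ℓ ε)) (nhdsWithin 0 (Ioi 0)) (nhds (w t x)) ∧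
      ∀ ψ : ℝ → EuclideanSpace ℝ (Fin d), ψ =o[nhdsWithin (0 : ℝ) (Ioi 0)] (fun ε => ε) →
        ∃ B ∈ nhds x, ∀ᶠ ε in nhdsWithin (0 : ℝ) (Ioi 0), ∀ y ∈ closure 𝒪, y ∈ B →
          y + ℓ ε + ψ ε ∈ 𝒪 := by
  by_cases hxO : x ∈ 𝒪
  · refine ⟨0, fun _ => 0, fun _ => 0, le_rfl, ?_, by simp, tendsto_const_nhds, ?_, ?_⟩
    · exact Eventually.frequently (Eventually.of_forall fun ε => by simp)
    · simp only [add_zero]; exact tendsto_const_nhds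
    · intro ψ hψ
      obtain ⟨s, hs, hball⟩ := Metric.isOpen_iff.1 h𝒪 x hxO
      refine ⟨Metric.ball x (s / 2), Metric.ball_mem_nhds x (by positivity), ?_⟩
      have h1 := isLittleO_iff.1 hψ (c := 1) one_pos
      have h2 : ∀ᶠ ε in nhdsWithin (0 : ℝ) (Ioi 0), ε < s / 2 :=
        mem_nhdsWithin_of_mem_nhds (gt_mem_nhds (by positivity))
      filter_upwards [h1, h2, self_mem_nhdsWithin] with ε a1 a2 a3 y _ hy
      have a4 : ‖ψ ε‖ < s / 2 := by
        rw [one_mul, Real.norm_eq_abs, abs_of_pos a3] at a1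
        exact a1.trans_lt a2
      apply hball
      rw [Metric.mem_ball, dist_eq_norm] at hy ⊢
      have : y + 0 + ψ ε - x = (y - x) + ψ ε := by abel
      rw [this]
      linarith [norm_add_le (y - x) (ψ ε)]
  · have hfr : x ∈ frontier 𝒪 := by
      rw [closure_eq_self_union_frontier] at hx
      exact hx.resolve_left hxO
    obtain ⟨r, hr, B, hB, hxB, ℓ, hl, hψ, lam, h1, h2, h3⟩ := hR t ht x hfr
    obtain ⟨b, hb1, hb2⟩ := exists_between hl
    have hf := frequently_lt_of_liminf_lt (by isBoundedDefault) hb1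
    refine ⟨b.toReal, ℓ, lam, ENNReal.toReal_nonneg, ?_, h1, h2, h3, ?_⟩
    · refine (hf.and_eventually self_mem_nhdsWithin).mono ?_
      rintro ε ⟨a1, a2⟩
      have a3 : (0 : ℝ) < ε := a2
      have a4 : ε⁻¹ * ‖ℓ ε‖ ≤ b.toReal := by
        rw [← ENNReal.ofReal_le_iff_le_toReal hb2.ne]
        exact a1.le
      calc ‖ℓ ε‖ = ε⁻¹ * ‖ℓ ε‖ * ε := by field_simp
        _ ≤ _ := by gcongr
    · intro ψ hψo
      obtain ⟨r', hr', h4⟩ := hψ ψ hψo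
      refine ⟨B, hB.mem_nhds hxB, ?_⟩
      filter_upwards [Ioo_mem_nhdsGT (lt_min hr hr')] with ε hε y hy hyB
      exact h4 y ⟨hy, hyB⟩ ε hε

set_option maxHeartbeats 1000000 in
theorem core_kappa {d : ℕ} {𝒪 : Set (EuclideanSpace ℝ (Fin d))} {T ρ : ℝ} (hρ : 0 < ρ)
    {H : EuclideanSpace ℝ (Fin d) → EuclideanSpace ℝ (Fin d) → Matrix (Fin d) (Fin d) ℝ → ℝ}
    (Hcont : Continuous (fun z : EuclideanSpace ℝ (Fin d) × EuclideanSpace ℝ (Fin d) ×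
      Matrix (Fin d) (Fin d) ℝ => H z.1 z.2.1 z.2.2)) (h𝒪 : IsOpen 𝒪) {α : ℝ} (hα : 0 < α)
    (HA : A1body d 𝒪 H α)
    {w₁ w₂ : ℝ → EuclideanSpace ℝ (Fin d) → ℝ} (hsub : SubSol d 𝒪 T ρ H w₁)
    (hsuper : SuperSol d 𝒪 T ρ H w₂) {t : ℝ} {x : EuclideanSpace ℝ (Fin d)} {r : ℝ} (hr : 0 < r)
    (ht : t ∈ Ico 0 T) (hx : x ∈ closure 𝒪)
    (hu : UpperSemicontinuousOn (fun z : Et d => w₁ z.fst z.snd) (Nb T (closure 𝒪) t x r))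
    (hv : UpperSemicontinuousOn (fun z : Et d => - w₂ z.fst z.snd) (Nb T (closure 𝒪) t x r))
    {K c a σ : ℝ} {P : EuclideanSpace ℝ (Fin d)} (hc : 0 ≤ c) (hσ : 0 < σ)
    (hloc : ∀ ζ ∈ Nb T (closure 𝒪) t x r, w₁ ζ.fst ζ.snd - w₂ ζ.fst ζ.snd ≤
      w₁ t x - w₂ t x + quadF (WithLp.toLp 2 (t, x)) (WithLp.toLp 2 (a, P)) (Rop d K c) ζ -
        σ * ‖ζ - WithLp.toLp 2 (t, x)‖ ^ 2)
    {C0 : ℝ} {ℓ : ℝ → EuclideanSpace ℝ (Fin d)} {lam : ℝ → ℝ} (hC0 : 0 ≤ C0)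
    (hfreq : ∃ᶠ ε in nhdsWithin (0 : ℝ) (Ioi 0), ‖ℓ ε‖ ≤ C0 * ε)
    (hlam : ∀ ε > (0 : ℝ), 0 ≤ lam ε) (hlam0 : Tendsto lam (nhdsWithin 0 (Ioi 0)) (nhds 0))
    (hwl : Tendsto (fun ε => w₂ (t + lam ε) (x + ℓ ε)) (nhdsWithin 0 (Ioi 0)) (nhds (w₂ t x)))
    (hψ : ∀ ψ : ℝ → EuclideanSpace ℝ (Fin d), ψ =o[nhdsWithin (0 : ℝ) (Ioi 0)] (fun ε => ε) →
        ∃ B ∈ nhds x, ∀ᶠ ε in nhdsWithin (0 : ℝ) (Ioi 0), ∀ y ∈ closure 𝒪, y ∈ B →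
          y + ℓ ε + ψ ε ∈ 𝒪) {κ : ℝ} (hκ : 0 < κ) :
    ρ * (w₁ t x - w₂ t x) - a ≤ α * (κ * ((C0 + 1) + (C0 + 1) ^ 2) + (1 + ‖x‖) * ‖P‖ +
      (1 + ‖x‖ ^ 2) * (2 * c)) := by
  set z₀ : Et d := WithLp.toLp 2 (t, x) with hz₀d
  set π : Et d := WithLp.toLp 2 (a, P) with hπd
  set N := Nb T (closure 𝒪) t x r with hN
  have hNc : IsCompact N := Nb_compact T isClosed_closure t x r
  have hz₀ : z₀ ∈ N := ⟨⟨ht.1, ht.2.le⟩, hx, by simp [hz₀d, hr.le], by simp [hz₀d, hr.le]⟩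
  set 𝓕 : Filter ℝ := nhdsWithin (0 : ℝ) (Ioi 0) ⊓ 𝓟 {ε | ‖ℓ ε‖ ≤ C0 * ε} with h𝓕d
  have h𝓕ne : 𝓕.NeBot := frequently_iff_neBot.1 hfreq
  have h𝓕 : 𝓕 ≤ nhdsWithin 0 (Ioi 0) := inf_le_left
  have hS : ∀ᶠ ε in 𝓕, ‖ℓ ε‖ ≤ C0 * ε := inf_le_right (a := nhdsWithin (0 : ℝ) (Ioi 0)) (mem_principal_self _)
  have hpos : ∀ᶠ ε in 𝓕, (0 : ℝ) < ε := h𝓕 (eventually_mem_nhdsWithin)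
  have hε0 : Tendsto (fun ε : ℝ => ε) 𝓕 (nhds 0) :=
    tendsto_id.mono_left (h𝓕.trans nhdsWithin_le_nhds)
  have hl0 : Tendsto ℓ 𝓕 (nhds 0) := by
    refine squeeze_zero_norm' hS ?_
    simpa using hε0.const_mul C0
  have hlam0' := hlam0.mono_left h𝓕
  set e : ℝ → Et d := fun ε => WithLp.toLp 2 (lam ε, ℓ ε) with hed
  have he : Tendsto e 𝓕 (nhds 0) :=
    ((WithLp.prod_continuous_toLp 2 ℝ (EuclideanSpace ℝ (Fin d))).tendsto (0, 0)).comp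
      (hlam0'.prodMk_nhds hl0)
  have hc1 : Continuous (fun y : Et d => y.fst) := (WithLp.fstL 2 ℝ ℝ (EuclideanSpace ℝ (Fin d))).continuous
  have hc2 : Continuous (fun y : Et d => y.snd) := (WithLp.sndL 2 ℝ ℝ (EuclideanSpace ℝ (Fin d))).continuous
  set F : Et d → ℝ := quadF z₀ π (Rop d K c) with hF
  have hFc : Continuous F := by
    rw [hF]; unfold quadF; fun_prop
  have hF0 : F z₀ = 0 := by simp [hF, quadF]
  set G : Et d × Et d → ℝ := fun q => (w₁ q.1.fst q.1.snd + - w₂ q.2.fst q.2.snd) + - F q.1 with hGd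
  have hGu : UpperSemicontinuousOn G (N ×ˢ N) := by
    have u1 : UpperSemicontinuousOn (fun q : Et d × Et d => w₁ q.1.fst q.1.snd) (N ×ˢ N) := by
      intro q hq b hb
      have hct : Tendsto (fun q : Et d × Et d => q.1) (nhdsWithin q (N ×ˢ N)) (nhdsWithin q.1 N) :=
        tendsto_nhdsWithin_iff.mpr ⟨(continuous_fst.tendsto q).mono_left nhdsWithin_le_nhds,
          eventually_mem_nhdsWithin.mono fun y hy => hy.1⟩
      exact hct.eventually (hu q.1 hq.1 b hb)
    have u2 : UpperSemicontinuousOn (fun q : Et d × Et d => - w₂ q.2.fst q.2.snd) (N ×ˢ N) := by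
      intro q hq b hb
      have hct : Tendsto (fun q : Et d × Et d => q.2) (nhdsWithin q (N ×ˢ N)) (nhdsWithin q.2 N) :=
        tendsto_nhdsWithin_iff.mpr ⟨(continuous_snd.tendsto q).mono_left nhdsWithin_le_nhds,
          eventually_mem_nhdsWithin.mono fun y hy => hy.2⟩
      exact hct.eventually (hv q.2 hq.2 b hb)
    exact (u1.add u2).add (ContinuousOn.upperSemicontinuousOn (by fun_prop))
  have hG0 : G (z₀, z₀) = w₁ t x - w₂ t x := by
    simp only [hGd, hF0]; show w₁ t x + - w₂ t x + -0 = _; ring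
  have hstrict : ∀ ζ ∈ N, ζ ≠ z₀ → G (ζ, ζ) < G (z₀, z₀) := by
    intro ζ hζ hne
    have h1 := hloc ζ hζ
    have h2 : 0 < σ * ‖ζ - z₀‖ ^ 2 := by
      have : 0 < ‖ζ - z₀‖ := norm_pos_iff.2 (sub_ne_zero.2 hne)
      positivity
    rw [hG0]
    simp only [hGd]
    linarith
  have hB0 := hψ (fun _ => 0) (isLittleO_zero _ _)
  obtain ⟨B, hB, hB1⟩ := hB0
  have heN : ∀ᶠ ε in 𝓕, z₀ + e ε ∈ N := by
    have n1 : ∀ᶠ ε in 𝓕, lam ε < min (T - t) r :=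
      hlam0'.eventually (gt_mem_nhds (lt_min (by linarith [ht.2]) hr))
    have n2 : ∀ᶠ ε in 𝓕, ‖ℓ ε‖ < r := by
      have := hl0.norm
      rw [norm_zero] at this
      exact this.eventually (gt_mem_nhds hr)
    filter_upwards [n1, n2, hpos, h𝓕 hB1] with ε a1 a2 a3 a4
    have a5 := hlam ε a3
    have a6 := a4 x hx (mem_of_mem_nhds hB)
    rw [add_zero] at a6
    have a7 := lt_min_iff.1 a1
    refine ⟨⟨?_, ?_⟩, subset_closure a6, ?_, ?_⟩
    · show 0 ≤ t + lam ε
      linarith [ht.1]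
    · show t + lam ε ≤ T
      linarith
    · show |t + lam ε - t| ≤ r
      rw [add_sub_cancel_left, abs_of_nonneg a5]; exact a7.2.le
    · show ‖x + ℓ ε - x‖ ≤ r
      rw [add_sub_cancel_left]; exact a2.le
  have hGe : Tendsto (fun ε => G (z₀, z₀ + e ε)) 𝓕 (nhds (G (z₀, z₀))) := by
    have h1 := ((hwl.mono_left h𝓕).neg.const_add (w₁ t x)).add_const (-F z₀)
    exact h1
  obtain ⟨z, z', hz, hz', hmax, hzl, hzl', hsmall, hlow⟩ :=
    doubling hNc hGu hz₀ hstrict h𝓕 he heN hGe hκ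
  have hzf : Tendsto (fun ε => (z ε).fst) 𝓕 (nhds t) := (hc1.tendsto z₀).comp hzl
  have hzs : Tendsto (fun ε => (z ε).snd) 𝓕 (nhds x) := (hc2.tendsto z₀).comp hzl
  have hzf' : Tendsto (fun ε => (z' ε).fst) 𝓕 (nhds t) := (hc1.tendsto z₀).comp hzl'
  have hzs' : Tendsto (fun ε => (z' ε).snd) 𝓕 (nhds x) := (hc2.tendsto z₀).comp hzl'
  have hsn : ∀ y : Et d, ‖y.snd‖ ≤ ‖y‖ := by
    intro y
    rw [← sq_le_sq₀ (norm_nonneg _) (norm_nonneg _), WithLp.prod_norm_sq_eq_of_L2]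
    linarith [sq_nonneg ‖y.fst‖]
  have hsmall' : ∀ τ > 0, ∀ᶠ ε in 𝓕, ‖(z ε).snd - (z' ε).snd + ℓ ε‖ ≤ τ * ε := by
    intro τ hτ
    filter_upwards [hsmall τ hτ] with ε h
    have h0 := hsn (z ε - z' ε + e ε)
    have h1 : (z ε - z' ε + e ε).snd = (z ε).snd - (z' ε).snd + ℓ ε := by
      rw [WithLp.add_snd, WithLp.sub_snd]; rfl
    rw [h1] at h0
    exact h0.trans h
  -- the supersolution point lies in the open set
  classical
  have hO : ∀ᶠ ε in 𝓕, (z' ε).snd ∈ 𝒪 := by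
    let ψ : ℝ → EuclideanSpace ℝ (Fin d) := fun ε =>
      if ‖ℓ ε‖ ≤ C0 * ε then -((z ε).snd - (z' ε).snd + ℓ ε) else 0
    have hψo : ψ =o[nhdsWithin (0 : ℝ) (Ioi 0)] (fun ε => ε) := by
      rw [isLittleO_iff]
      intro τ hτ
      have h1 := eventually_inf_principal.1 (hsmall' τ hτ)
      filter_upwards [h1, self_mem_nhdsWithin] with ε a1 a2
      have a3 : (0 : ℝ) < ε := a2
      rw [Real.norm_eq_abs, abs_of_pos a3]
      by_cases hh : ‖ℓ ε‖ ≤ C0 * ε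
      · simp only [ψ, if_pos hh, norm_neg]; exact a1 hh
      · simp only [ψ, if_neg hh, norm_zero]; positivity
    obtain ⟨B', hB', hB1'⟩ := hψ ψ hψo
    filter_upwards [h𝓕 hB1', hS, hzs.eventually hB'] with ε a1 a2 a3
    have a4 := a1 _ (hz ε).2.1 a3
    simp only [ψ, if_pos a2] at a4
    convert a4 using 1
    abel
  -- pointwise inequality
  have hineq : ∀ᶠ ε in 𝓕, ρ * (G (z₀, z₀ + e ε) + F (z ε)) - (π + Rop d K c (z ε - z₀)).fst ≤
      α * (((C0 + 1) * ε + κ * ((C0 + 1) + (C0 + 1) ^ 2)) +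
        (1 + ‖(z ε).snd‖) * ‖(π + Rop d K c (z ε - z₀)).snd‖ + (1 + ‖(z ε).snd‖ ^ 2) * (2 * c)) := by
    have b1 : ∀ᶠ ε in 𝓕, |(z ε).fst - t| < r := by
      have := (hzf.sub_const t).abs
      rw [sub_self, abs_zero] at this
      exact this.eventually (gt_mem_nhds hr)
    have b2 : ∀ᶠ ε in 𝓕, ‖(z ε).snd - x‖ < r := by
      have := (hzs.sub_const x).norm
      rw [sub_self, norm_zero] at this
      exact this.eventually (gt_mem_nhds hr)
    have b1' : ∀ᶠ ε in 𝓕, |(z' ε).fst - t| < r := by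
      have := (hzf'.sub_const t).abs
      rw [sub_self, abs_zero] at this
      exact this.eventually (gt_mem_nhds hr)
    have b2' : ∀ᶠ ε in 𝓕, ‖(z' ε).snd - x‖ < r := by
      have := (hzs'.sub_const x).norm
      rw [sub_self, norm_zero] at this
      exact this.eventually (gt_mem_nhds hr)
    have b3 : ∀ᶠ ε in 𝓕, (C0 + 1) * ε ≤ 1 := by
      have := hε0.const_mul (C0 + 1)
      rw [mul_zero] at this
      exact (this.eventually (gt_mem_nhds one_pos)).mono fun ε h => le_of_lt h
    have b4 : ∀ᶠ ε in 𝓕, ε < Real.sqrt κ := hε0.eventually (gt_mem_nhds (Real.sqrt_pos.2 hκ))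
    filter_upwards [b1, b2, b1', b2', b3, b4, hpos, hS, hO, hsmall' 1 one_pos, hlow,
      hzf.eventually (gt_mem_nhds ht.2), hzf'.eventually (gt_mem_nhds ht.2)]
      with ε a1 a2 a1' a2' a3 a4 hε a5 a6 a7 a8 a9 a9'
    have hn : 1 ≤ Real.sqrt κ / ε := by rw [le_div_iff₀ hε, one_mul]; exact a4.le
    have hn2 : (Real.sqrt κ / ε) ^ 2 = κ / ε ^ 2 := by rw [div_pow, Real.sq_sqrt hκ.le]
    have hd : ‖(z ε).snd - (z' ε).snd‖ ≤ (C0 + 1) * ε := by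
      have : (z ε).snd - (z' ε).snd = ((z ε).snd - (z' ε).snd + ℓ ε) - ℓ ε := by abel
      rw [this]
      refine (norm_sub_le _ _).trans ?_
      linarith
    have key := sums_apply Hcont h𝒪 hα HA hsub hsuper hu hv (K := K) hc hn (z₀ := z₀) (π := π)
      (e := e ε) (hz ε) (hz' ε) (by
        intro ζ hζ ζ' hζ'
        have := hmax ε ζ hζ ζ' hζ'
        rw [hn2]
        simp only [hGd] at this
        linarith) a9 a1 a2 a9' a1' a2' a6 (hd.trans a3)
    have g1 : G (z₀, z₀ + e ε) + F (z ε) ≤ w₁ (z ε).fst (z ε).snd - w₂ (z' ε).fst (z' ε).snd := by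
      have : G (z ε, z' ε) = w₁ (z ε).fst (z ε).snd + - w₂ (z' ε).fst (z' ε).snd + -F (z ε) := rfl
      linarith
    have g2 := mul_le_mul_of_nonneg_left g1 hρ.le
    refine (sub_le_sub_right g2 _).trans (key.trans ?_)
    rw [hn2]
    have g3 : ‖(κ / ε ^ 2) • ((z ε).snd - (z' ε).snd + (e ε).snd)‖ ≤ κ / ε := by
      rw [norm_smul, Real.norm_eq_abs, abs_of_pos (by positivity)]
      calc _ ≤ κ / ε ^ 2 * (1 * ε) := by gcongr; exact a7
        _ = _ := by field_simp
    have g4 : ‖(z ε).snd - (z' ε).snd‖ * (1 + ‖(κ / ε ^ 2) • ((z ε).snd - (z' ε).snd + (e ε).snd)‖ +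
        κ / ε ^ 2 * ‖(z ε).snd - (z' ε).snd‖) ≤
        (C0 + 1) * ε + κ * ((C0 + 1) + (C0 + 1) ^ 2) := by
      calc _ ≤ ((C0 + 1) * ε) * (1 + κ / ε + κ / ε ^ 2 * ((C0 + 1) * ε)) := by gcongr
        _ = _ := by field_simp; ring
    gcongr
  -- pass to the limit
  have hRl : Tendsto (fun ε => π + Rop d K c (z ε - z₀)) 𝓕 (nhds π) := by
    have h1 : Continuous fun y : Et d => π + Rop d K c (y - z₀) := by fun_prop
    have h2 := (h1.tendsto z₀).comp hzl
    have h3 : π + Rop d K c (z₀ - z₀) = π := by rw [sub_self, map_zero, add_zero]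
    simp only [h3] at h2
    exact h2
  have l1 : Tendsto (fun ε => ρ * (G (z₀, z₀ + e ε) + F (z ε)) - (π + Rop d K c (z ε - z₀)).fst) 𝓕
      (nhds (ρ * (G (z₀, z₀) + F z₀) - π.fst)) :=
    ((hGe.add ((hFc.tendsto z₀).comp hzl)).const_mul ρ).sub ((hc1.tendsto π).comp hRl)
  have l2 : Tendsto (fun ε => α * (((C0 + 1) * ε + κ * ((C0 + 1) + (C0 + 1) ^ 2)) +
        (1 + ‖(z ε).snd‖) * ‖(π + Rop d K c (z ε - z₀)).snd‖ + (1 + ‖(z ε).snd‖ ^ 2) * (2 * c))) 𝓕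
      (nhds (α * (((C0 + 1) * 0 + κ * ((C0 + 1) + (C0 + 1) ^ 2)) +
        (1 + ‖x‖) * ‖π.snd‖ + (1 + ‖x‖ ^ 2) * (2 * c)))) :=
    (((((hε0.const_mul (C0 + 1)).add_const _).add ((hzs.norm.const_add 1).mul
      ((hc2.tendsto π).comp hRl).norm)).add (((hzs.norm.pow 2).const_add 1).mul_const _)).const_mul α)
  have fin := le_of_tendsto_of_tendsto l1 l2 hineq
  rw [hG0, hF0, mul_zero, zero_add, add_zero] at fin
  exact fin

theorem core {d : ℕ} {𝒪 : Set (EuclideanSpace ℝ (Fin d))} {T ρ : ℝ} (hρ : 0 < ρ)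
    {H : EuclideanSpace ℝ (Fin d) → EuclideanSpace ℝ (Fin d) → Matrix (Fin d) (Fin d) ℝ → ℝ}
    (Hcont : Continuous (fun z : EuclideanSpace ℝ (Fin d) × EuclideanSpace ℝ (Fin d) ×
      Matrix (Fin d) (Fin d) ℝ => H z.1 z.2.1 z.2.2)) (h𝒪 : IsOpen 𝒪) {α : ℝ} (hα : 0 < α)
    (HA : A1body d 𝒪 H α)
    {w₁ w₂ : ℝ → EuclideanSpace ℝ (Fin d) → ℝ} (hsub : SubSol d 𝒪 T ρ H w₁)
    (hsuper : SuperSol d 𝒪 T ρ H w₂)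
    (hw₁usc : UpperSemicontinuousOn (fun z : ℝ × EuclideanSpace ℝ (Fin d) => w₁ z.1 z.2)
      (Icc 0 T ×ˢ closure 𝒪))
    (hw₂lsc : LowerSemicontinuousOn (fun z : ℝ × EuclideanSpace ℝ (Fin d) => w₂ z.1 z.2)
      (Icc 0 T ×ˢ closure 𝒪)) (hR : ClassR d T 𝒪 w₂)
    {t : ℝ} {x : EuclideanSpace ℝ (Fin d)} {r : ℝ} (hr : 0 < r)
    (ht : t ∈ Ico 0 T) (hx : x ∈ closure 𝒪)
    {K c a σ : ℝ} {P : EuclideanSpace ℝ (Fin d)} (hc : 0 ≤ c) (hσ : 0 < σ)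
    (hloc : ∀ s ∈ Icc 0 T, ∀ y ∈ closure 𝒪, |s - t| ≤ r → ‖y - x‖ ≤ r →
      w₁ s y - w₂ s y ≤ w₁ t x - w₂ t x + a * (s - t) + inner ℝ P (y - x) + c * ‖y - x‖ ^ 2 +
        K * (s - t) ^ 2 - σ * (‖y - x‖ ^ 2 + (s - t) ^ 2)) :
    ρ * (w₁ t x - w₂ t x) - a ≤ α * ((1 + ‖x‖) * ‖P‖ + (1 + ‖x‖ ^ 2) * (2 * c)) := by
  obtain ⟨C0, ℓ, lam, h1, h2, h3, h4, h5, h6⟩ := core_pert h𝒪 hR ht hx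
  have hneg : UpperSemicontinuousOn (fun z : ℝ × EuclideanSpace ℝ (Fin d) => - w₂ z.1 z.2)
      (Icc 0 T ×ˢ closure 𝒪) := by
    intro z hz b hb
    have hb' : - b < w₂ z.1 z.2 := by
      have : - w₂ z.1 z.2 < b := hb
      linarith
    refine (hw₂lsc z hz (-b) hb').mono fun y hy => ?_
    have hy' : - b < w₂ y.1 y.2 := hy
    show - w₂ y.1 y.2 < b
    linarith
  have key : ∀ κ : ℝ, 0 < κ → ρ * (w₁ t x - w₂ t x) - a ≤
      α * (κ * ((C0 + 1) + (C0 + 1) ^ 2) + (1 + ‖x‖) * ‖P‖ +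
        (1 + ‖x‖ ^ 2) * (2 * c)) := fun κ hκ => core_kappa hρ Hcont h𝒪 hα HA hsub hsuper hr ht hx
    (usc_Et hw₁usc) (usc_Et (w := fun t x => - w₂ t x) hneg) (K := K) (c := c) (a := a) (σ := σ)
    (P := P) hc hσ (by
      intro ζ hζ
      have := hloc ζ.fst hζ.1 ζ.snd hζ.2.1 hζ.2.2.1 hζ.2.2.2
      have e1 : quadF (WithLp.toLp 2 (t, x)) (WithLp.toLp 2 (a, P)) (Rop d K c) ζ =
          a * (ζ.fst - t) + inner ℝ P (ζ.snd - x) + c * ‖ζ.snd - x‖ ^ 2 + K * (ζ.fst - t) ^ 2 := by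
        rw [quadF, Rop_apply, WithLp.prod_inner_apply, WithLp.prod_inner_apply]
        simp [inner_smul_left, real_inner_self_eq_norm_sq]
        ring
      have e2 : ‖ζ - WithLp.toLp 2 (t, x)‖ ^ 2 = ‖ζ.snd - x‖ ^ 2 + (ζ.fst - t) ^ 2 := by
        rw [WithLp.prod_norm_sq_eq_of_L2]
        simp
        ring
      rw [e1, e2]
      linarith) h1 h2 h3 h4 h5 h6 hκ
  have hlim : Tendsto (fun κ : ℝ => α * (κ * ((C0 + 1) + (C0 + 1) ^ 2) + (1 + ‖x‖) * ‖P‖ +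
      (1 + ‖x‖ ^ 2) * (2 * c))) (nhdsWithin 0 (Ioi 0)) (nhds (α * (0 * ((C0 + 1) + (C0 + 1) ^ 2) +
        (1 + ‖x‖) * ‖P‖ + (1 + ‖x‖ ^ 2) * (2 * c)))) :=
    (Continuous.tendsto (by fun_prop) 0).mono_left nhdsWithin_le_nhds
  rw [zero_mul, zero_add] at hlim
  refine ge_of_tendsto hlim ?_
  filter_upwards [self_mem_nhdsWithin] with κ hκ
  exact key κ hκ

theorem g_local {d : ℕ} (k : ℕ) {Λ : ℝ} (hΛ : 0 ≤ Λ) (x h : EuclideanSpace ℝ (Fin d)) {τ r : ℝ}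
    (hr : r = 1 / (1 + 4 * k + 2 * Λ)) (hτ : |τ| ≤ r) (hh : ‖h‖ ≤ r) :
    Real.exp (-(Λ * τ)) * (1 + ‖x + h‖ ^ 2) ^ k ≤ (1 + ‖x‖ ^ 2) ^ k *
      (1 + -(Λ * τ) + 2 * k * inner ℝ x h / (1 + ‖x‖ ^ 2) +
        (k + 10 * k ^ 2) * ‖h‖ ^ 2 / (1 + ‖x‖ ^ 2) + 2 * Λ ^ 2 * τ ^ 2) := by
  have hk : (0 : ℝ) ≤ k := Nat.cast_nonneg k
  have hD : 0 < 1 + 4 * (k : ℝ) + 2 * Λ := by positivity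
  have hr0 : 0 < r := by rw [hr]; positivity
  have hrD : r * (1 + 4 * (k : ℝ) + 2 * Λ) = 1 := by rw [hr]; field_simp
  have hr1 : r ≤ 1 := by nlinarith [mul_nonneg hr0.le hk, mul_nonneg hr0.le hΛ]
  set b : ℝ := 1 + ‖x‖ ^ 2 with hb
  have hb1 : 1 ≤ b := by nlinarith [sq_nonneg ‖x‖]
  have hb0 : 0 < b := by linarith
  have hn : ‖x + h‖ ^ 2 = ‖x‖ ^ 2 + 2 * inner ℝ x h + ‖h‖ ^ 2 := norm_add_sq_real x h
  set θ : ℝ := (2 * inner ℝ x h + ‖h‖ ^ 2) / b with hθ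
  have hbθ : 1 + ‖x + h‖ ^ 2 = b * (1 + θ) := by
    rw [hn, hθ]; field_simp; rw [hb]; ring
  have h1θ : 0 ≤ 1 + θ := by
    by_contra hc
    push Not at hc
    have : b * (1 + θ) < 0 := mul_neg_of_pos_of_neg hb0 hc
    rw [← hbθ] at this
    nlinarith [sq_nonneg ‖x + h‖]
  have hpow : (1 + θ) ^ k ≤ Real.exp (k * θ) := by
    rw [Real.exp_nat_mul]
    exact pow_le_pow_left₀ h1θ (by linarith [Real.add_one_le_exp θ]) k
  have hin := abs_real_inner_le_norm x h
  have hθ2 : θ ^ 2 ≤ 5 * ‖h‖ ^ 2 / b := by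
    rw [hθ, div_pow, div_le_div_iff₀ (by positivity) hb0]
    have e1 : |2 * inner ℝ x h + ‖h‖ ^ 2| ≤ (2 * ‖x‖ + 1) * ‖h‖ := by
      refine (abs_add_le _ _).trans ?_
      rw [abs_mul, abs_two, abs_of_nonneg (sq_nonneg ‖h‖)]
      nlinarith [norm_nonneg h, hh.trans hr1]
    have e2 : (2 * inner ℝ x h + ‖h‖ ^ 2) ^ 2 ≤ ((2 * ‖x‖ + 1) * ‖h‖) ^ 2 := by
      rw [← sq_abs]; gcongr
    have e3 : (2 * ‖x‖ + 1) ^ 2 ≤ 5 * b := by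
      rw [hb]; nlinarith [sq_nonneg (‖x‖ - 2)]
    calc _ ≤ ((2 * ‖x‖ + 1) * ‖h‖) ^ 2 * b := by gcongr
      _ = (2 * ‖x‖ + 1) ^ 2 * (‖h‖ ^ 2 * b) := by ring
      _ ≤ 5 * b * (‖h‖ ^ 2 * b) := by gcongr
      _ = _ := by ring
  set s : ℝ := k * θ + -(Λ * τ) with hs
  have hs2 : s ^ 2 ≤ 10 * k ^ 2 * ‖h‖ ^ 2 / b + 2 * Λ ^ 2 * τ ^ 2 := by
    have e1 : s ^ 2 ≤ 2 * k ^ 2 * θ ^ 2 + 2 * Λ ^ 2 * τ ^ 2 := by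
      rw [hs]; nlinarith [sq_nonneg (k * θ + Λ * τ)]
    have e2 : 2 * (k : ℝ) ^ 2 * θ ^ 2 ≤ 2 * k ^ 2 * (5 * ‖h‖ ^ 2 / b) := by gcongr
    have e3 : 2 * (k : ℝ) ^ 2 * (5 * ‖h‖ ^ 2 / b) = 10 * k ^ 2 * ‖h‖ ^ 2 / b := by ring
    linarith
  have hs1 : |s| ≤ 1 := by
    rw [← sq_le_one_iff_abs_le_one]
    refine hs2.trans ?_
    have e1 : 10 * (k : ℝ) ^ 2 * ‖h‖ ^ 2 / b ≤ 10 * k ^ 2 * r ^ 2 := by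
      refine (div_le_self (by positivity) hb1).trans ?_
      gcongr
    have e2 : 2 * Λ ^ 2 * τ ^ 2 ≤ 2 * Λ ^ 2 * r ^ 2 := by
      rw [← sq_abs τ]; gcongr
    have e3 : (r * (1 + 4 * (k : ℝ) + 2 * Λ)) ^ 2 = 1 := by rw [hrD]; norm_num
    have e4 : r ^ 2 * (10 * (k : ℝ) ^ 2 + 2 * Λ ^ 2) ≤ r ^ 2 * (1 + 4 * (k : ℝ) + 2 * Λ) ^ 2 := by
      gcongr
      nlinarith [mul_nonneg hk hΛ, sq_nonneg Λ, sq_nonneg (k : ℝ)]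
    rw [mul_pow] at e3
    linarith
  have hexp : Real.exp s ≤ 1 + s + s ^ 2 := by
    have := (abs_le.1 (Real.abs_exp_sub_one_sub_id_le hs1)).2
    linarith
  have hkθ : (k : ℝ) * θ = 2 * k * inner ℝ x h / b + k * ‖h‖ ^ 2 / b := by rw [hθ]; ring
  have hsplit : ((k : ℝ) + 10 * k ^ 2) * ‖h‖ ^ 2 / b = k * ‖h‖ ^ 2 / b + 10 * k ^ 2 * ‖h‖ ^ 2 / b := by
    ring
  rw [hbθ, mul_pow]
  calc Real.exp (-(Λ * τ)) * (b ^ k * (1 + θ) ^ k)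
      ≤ Real.exp (-(Λ * τ)) * (b ^ k * Real.exp (k * θ)) := by gcongr
    _ = b ^ k * Real.exp s := by rw [hs, Real.exp_add]; ring
    _ ≤ b ^ k * (1 + s + s ^ 2) := by gcongr
    _ ≤ _ := by
      gcongr ?_ * ?_
      rw [hsplit]
      linarith

theorem max_exists {d : ℕ} {𝒪 : Set (EuclideanSpace ℝ (Fin d))} {T δ Λ M : ℝ} {m : ℕ}
    (hδ : 0 < δ) (hΛ : 0 ≤ Λ)
    {w₁ w₂ : ℝ → EuclideanSpace ℝ (Fin d) → ℝ}
    (hw₁usc : UpperSemicontinuousOn (fun z : ℝ × EuclideanSpace ℝ (Fin d) => w₁ z.1 z.2)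
      (Icc 0 T ×ˢ closure 𝒪))
    (hneg : UpperSemicontinuousOn (fun z : ℝ × EuclideanSpace ℝ (Fin d) => - w₂ z.1 z.2)
      (Icc 0 T ×ˢ closure 𝒪))
    (hM : ∀ t ∈ Icc 0 T, ∀ x ∈ closure 𝒪, w₁ t x - w₂ t x ≤ M * (1 + ‖x‖ ^ 2) ^ m)
    {t0 : ℝ} {x0 : EuclideanSpace ℝ (Fin d)} (ht0 : t0 ∈ Icc 0 T) (hx0 : x0 ∈ closure 𝒪)
    (hpos : 0 < w₁ t0 x0 - w₂ t0 x0 - δ * Real.exp (Λ * (T - t0)) * (1 + ‖x0‖ ^ 2) ^ (m + 1)) :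
    ∃ t ∈ Icc 0 T, ∃ x ∈ closure 𝒪,
      0 < w₁ t x - w₂ t x - δ * Real.exp (Λ * (T - t)) * (1 + ‖x‖ ^ 2) ^ (m + 1) ∧
      ∀ s ∈ Icc 0 T, ∀ y ∈ closure 𝒪,
        w₁ s y - w₂ s y - δ * Real.exp (Λ * (T - s)) * (1 + ‖y‖ ^ 2) ^ (m + 1) ≤
        w₁ t x - w₂ t x - δ * Real.exp (Λ * (T - t)) * (1 + ‖x‖ ^ 2) ^ (m + 1) := by
  set R : ℝ := |M| / δ + 1 with hR
  have hR1 : 1 ≤ R := by have : 0 ≤ |M| / δ := by positivity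
                         linarith
  have hbd : ∀ s ∈ Icc 0 T, ∀ y ∈ closure 𝒪,
      0 < w₁ s y - w₂ s y - δ * Real.exp (Λ * (T - s)) * (1 + ‖y‖ ^ 2) ^ (m + 1) → ‖y‖ ≤ R := by
    intro s hs y hy h
    have h1 := hM s hs y hy
    have h2 : 1 ≤ Real.exp (Λ * (T - s)) :=
      Real.one_le_exp (mul_nonneg hΛ (by linarith [hs.2]))
    have hbpos : 0 < (1 + ‖y‖ ^ 2) ^ m := by positivity
    have h3 : δ * 1 * (1 + ‖y‖ ^ 2) ^ (m + 1) ≤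
        δ * Real.exp (Λ * (T - s)) * (1 + ‖y‖ ^ 2) ^ (m + 1) := by gcongr
    have h4 : (1 + ‖y‖ ^ 2) ^ m * (δ * (1 + ‖y‖ ^ 2)) < (1 + ‖y‖ ^ 2) ^ m * |M| := by
      have : M * (1 + ‖y‖ ^ 2) ^ m ≤ |M| * (1 + ‖y‖ ^ 2) ^ m := by gcongr; exact le_abs_self M
      rw [pow_succ] at h3 h
      nlinarith
    have h5 : δ * (1 + ‖y‖ ^ 2) < |M| := lt_of_mul_lt_mul_left h4 hbpos.le
    have h6 : 1 + ‖y‖ ^ 2 < |M| / δ := by rw [lt_div_iff₀ hδ]; linarith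
    nlinarith [norm_nonneg y]
  have hKc : IsCompact (Icc 0 T ×ˢ (closure 𝒪 ∩ Metric.closedBall (0 : EuclideanSpace ℝ (Fin d)) R)) :=
    isCompact_Icc.prod ((isCompact_closedBall _ _).inter_left isClosed_closure)
  have hsubset : Icc 0 T ×ˢ (closure 𝒪 ∩ Metric.closedBall (0 : EuclideanSpace ℝ (Fin d)) R) ⊆
      Icc 0 T ×ˢ closure 𝒪 := prod_mono subset_rfl inter_subset_left
  have husc : UpperSemicontinuousOn (fun z : ℝ × EuclideanSpace ℝ (Fin d) =>
      (w₁ z.1 z.2 + - w₂ z.1 z.2) + -(δ * Real.exp (Λ * (T - z.1)) * (1 + ‖z.2‖ ^ 2) ^ (m + 1)))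
      (Icc 0 T ×ˢ (closure 𝒪 ∩ Metric.closedBall (0 : EuclideanSpace ℝ (Fin d)) R)) := by
    refine ((hw₁usc.mono hsubset).add (hneg.mono hsubset)).add ?_
    apply ContinuousOn.upperSemicontinuousOn
    fun_prop
  have hm0 := hbd t0 ht0 x0 hx0 hpos
  have hmem : (t0, x0) ∈ Icc 0 T ×ˢ
      (closure 𝒪 ∩ Metric.closedBall (0 : EuclideanSpace ℝ (Fin d)) R) :=
    ⟨ht0, hx0, mem_closedBall_zero_iff.2 hm0⟩
  obtain ⟨z, hz, hzmax⟩ := UpperSemicontinuousOn.exists_isMaxOn ⟨(t0, x0), hmem⟩ hKc husc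
  have hv0 := hzmax hmem
  simp only [mem_ofPred_eq] at hv0
  refine ⟨z.1, hz.1, z.2, hz.2.1, by linarith, ?_⟩
  intro s hs y hy
  by_cases hp : 0 < w₁ s y - w₂ s y - δ * Real.exp (Λ * (T - s)) * (1 + ‖y‖ ^ 2) ^ (m + 1)
  · have h1 := hbd s hs y hy hp
    have hv1 := hzmax (show (s, y) ∈ Icc 0 T ×ˢ (closure 𝒪 ∩ Metric.closedBall 0 R) from
      ⟨hs, hy, by simpa using h1⟩)
    simp only [mem_ofPred_eq] at hv1
    linarith
  · push Not at hp
    linarith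

theorem growth_bound {d : ℕ} (C : ℝ) (p m : ℕ) (hpm : p ≤ m) (x : EuclideanSpace ℝ (Fin d)) :
    C * (1 + ‖x‖ ^ p) ≤ 2 * |C| * (1 + ‖x‖ ^ 2) ^ m := by
  have hb1 : 1 ≤ 1 + ‖x‖ ^ 2 := by nlinarith [sq_nonneg ‖x‖]
  have h1 : ‖x‖ ^ p ≤ (1 + ‖x‖ ^ 2) ^ m :=
    (pow_le_pow_left₀ (norm_nonneg x) (by nlinarith [sq_nonneg (‖x‖ - 1)]) p).trans
      (pow_le_pow_right₀ hb1 hpm)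
  have h2 : 1 ≤ (1 + ‖x‖ ^ 2) ^ m := one_le_pow₀ hb1
  calc C * (1 + ‖x‖ ^ p) ≤ |C| * (1 + ‖x‖ ^ p) := by gcongr; exact le_abs_self C
    _ ≤ |C| * ((1 + ‖x‖ ^ 2) ^ m + (1 + ‖x‖ ^ 2) ^ m) := by gcongr
    _ = _ := by ring

theorem final_contra {d : ℕ} {𝒪 : Set (EuclideanSpace ℝ (Fin d))} {T ρ : ℝ} (hρ : 0 < ρ)
    {H : EuclideanSpace ℝ (Fin d) → EuclideanSpace ℝ (Fin d) → Matrix (Fin d) (Fin d) ℝ → ℝ}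
    (Hcont : Continuous (fun z : EuclideanSpace ℝ (Fin d) × EuclideanSpace ℝ (Fin d) ×
      Matrix (Fin d) (Fin d) ℝ => H z.1 z.2.1 z.2.2)) (h𝒪 : IsOpen 𝒪) {α : ℝ} (hα : 0 < α)
    (HA : A1body d 𝒪 H α)
    {w₁ w₂ : ℝ → EuclideanSpace ℝ (Fin d) → ℝ} (hsub : SubSol d 𝒪 T ρ H w₁)
    (hsuper : SuperSol d 𝒪 T ρ H w₂)
    (hw₁usc : UpperSemicontinuousOn (fun z : ℝ × EuclideanSpace ℝ (Fin d) => w₁ z.1 z.2)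
      (Icc 0 T ×ˢ closure 𝒪))
    (hw₂lsc : LowerSemicontinuousOn (fun z : ℝ × EuclideanSpace ℝ (Fin d) => w₂ z.1 z.2)
      (Icc 0 T ×ˢ closure 𝒪)) (hR : ClassR d T 𝒪 w₂)
    (hterm : ∀ x ∈ closure 𝒪, w₁ T x ≤ w₂ T x) {M : ℝ} {m : ℕ}
    (hM : ∀ t ∈ Icc 0 T, ∀ x ∈ closure 𝒪, w₁ t x - w₂ t x ≤ M * (1 + ‖x‖ ^ 2) ^ m)
    {t0 : ℝ} {x0 : EuclideanSpace ℝ (Fin d)} (ht0 : t0 ∈ Icc 0 T) (hx0 : x0 ∈ closure 𝒪)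
    (hbad : w₂ t0 x0 < w₁ t0 x0) : False := by
  have hneg : UpperSemicontinuousOn (fun z : ℝ × EuclideanSpace ℝ (Fin d) => - w₂ z.1 z.2)
      (Icc 0 T ×ˢ closure 𝒪) := by
    intro z hz b hb
    have hb' : - b < w₂ z.1 z.2 := by
      have : - w₂ z.1 z.2 < b := hb
      linarith
    refine (hw₂lsc z hz (-b) hb').mono fun y hy => ?_
    have hy' : - b < w₂ y.1 y.2 := hy
    show - w₂ y.1 y.2 < b
    linarith
  set k : ℕ := m + 1 with hk
  set c1 : ℝ := k + 10 * k ^ 2 with hc1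
  have hc10 : 0 ≤ c1 := by positivity
  set Λ : ℝ := α * (4 * k + 2 * c1 + 2) with hΛd
  have hΛ : 0 ≤ Λ := by positivity
  set D0 : ℝ := Real.exp (Λ * (T - t0)) * (1 + ‖x0‖ ^ 2) ^ k with hD0
  have hD0pos : 0 < D0 := by positivity
  set δ : ℝ := (w₁ t0 x0 - w₂ t0 x0) / (2 * D0) with hδd
  have hδ : 0 < δ := div_pos (by linarith) (by positivity)
  have hδ2 : δ * D0 = (w₁ t0 x0 - w₂ t0 x0) / 2 := by rw [hδd]; field_simp
  obtain ⟨t, ht, x, hx, hpos, hmax⟩ := max_exists hδ hΛ hw₁usc hneg hM ht0 hx0 (by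
    rw [mul_assoc, ← hk, ← hD0, hδ2]; linarith)
  rw [← hk] at hpos
  set b : ℝ := 1 + ‖x‖ ^ 2 with hb
  have hb1 : 1 ≤ b := by nlinarith [sq_nonneg ‖x‖]
  have hb0 : 0 < b := by linarith
  set g0 : ℝ := δ * Real.exp (Λ * (T - t)) * b ^ k with hg0
  have hg0pos : 0 < g0 := by positivity
  have htT : t < T := by
    refine lt_of_le_of_ne ht.2 fun h => ?_
    have := hterm x hx
    rw [← h] at this
    linarith
  have key := core hρ Hcont h𝒪 hα HA hsub hsuper hw₁usc hw₂lsc hR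
    (r := 1 / (1 + 4 * (k : ℝ) + 2 * Λ)) (by positivity) ⟨ht.1, htT⟩ hx
    (K := g0 * (2 * Λ ^ 2 + 1)) (c := g0 * (c1 + 1) / b) (a := -(g0 * Λ)) (σ := g0 / b)
    (P := (2 * k * g0 / b) • x) (by positivity) (by positivity) (by
      intro s hs y hy h1 h2
      have e1 := hmax s hs y hy
      rw [← hk] at e1
      have e2 := g_local k hΛ x (y - x) rfl h1 h2
      rw [add_sub_cancel] at e2
      have e3 : δ * Real.exp (Λ * (T - s)) * (1 + ‖y‖ ^ 2) ^ k =
          δ * Real.exp (Λ * (T - t)) * (Real.exp (-(Λ * (s - t))) * (1 + ‖y‖ ^ 2) ^ k) := by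
        have : Λ * (T - s) = Λ * (T - t) + -(Λ * (s - t)) := by ring
        rw [this, Real.exp_add]; ring
      have e4 := mul_le_mul_of_nonneg_left e2
        (show 0 ≤ δ * Real.exp (Λ * (T - t)) by positivity)
      rw [← e3, ← mul_assoc, ← hb, ← hg0, ← hc1] at e4
      rw [real_inner_smul_left]
      have e5 : g0 / b * (s - t) ^ 2 ≤ g0 * (s - t) ^ 2 := by
        gcongr
        exact div_le_self hg0pos.le hb1
      have e6 : g0 * (1 + -(Λ * (s - t)) + 2 * k * inner ℝ x (y - x) / b +
          c1 * ‖y - x‖ ^ 2 / b + 2 * Λ ^ 2 * (s - t) ^ 2) =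
          g0 + -(g0 * Λ) * (s - t) + 2 * k * g0 / b * inner ℝ x (y - x) +
          g0 * (c1 + 1) / b * ‖y - x‖ ^ 2 + g0 * (2 * Λ ^ 2 + 1) * (s - t) ^ 2 -
          (g0 / b * ‖y - x‖ ^ 2 + g0 * (s - t) ^ 2) := by ring
      rw [e6] at e4
      linarith)
  rw [← hb, norm_smul, Real.norm_eq_abs, abs_of_nonneg (by positivity)] at key
  have f1 : (1 + ‖x‖) * (2 * k * g0 / b * ‖x‖) ≤ 4 * k * g0 := by
    have : (1 + ‖x‖) * ‖x‖ ≤ 2 * b := by rw [hb]; nlinarith [sq_nonneg (‖x‖ - 1)]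
    calc _ = 2 * k * g0 / b * ((1 + ‖x‖) * ‖x‖) := by ring
      _ ≤ 2 * k * g0 / b * (2 * b) := by gcongr
      _ = _ := by field_simp; ring
  have f2 : b * (2 * (g0 * (c1 + 1) / b)) = g0 * (2 * c1 + 2) := by field_simp
  rw [f2] at key
  have f3 := mul_le_mul_of_nonneg_left f1 hα.le
  have f4 : 0 < ρ * (w₁ t x - w₂ t x) := mul_pos hρ (by linarith)
  have f5 : g0 * Λ = α * (4 * k * g0) + α * (g0 * (2 * c1 + 2)) := by rw [hΛd]; ring
  linarith

/-- **Theorem A.2** (comparison principle for state-constraint problems). Let `𝓗` be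
continuous and nonincreasing in its third variable (Loewner order) and satisfy
Assumption A.1. If `w₁` is an u.s.c. viscosity subsolution on `cl(𝒪)` and `w₂` an l.s.c.
viscosity supersolution on `𝒪` of `ρφ − ∂_t φ + 𝓗(·,Dφ,D²φ) = 0`, both of polynomial
growth, and `w₂` is of class `𝓡(𝒪)`, then `w₂ ≥ w₁` at time `T` implies `w₂ ≥ w₁` on
`[0,T] × cl(𝒪)`. -/
theorem stmt16 (d : ℕ) (𝒪 : Set (EuclideanSpace ℝ (Fin d))) (h𝒪 : IsOpen 𝒪)
    (T : ℝ) (hT : 0 < T) (ρ : ℝ) (hρ : 0 < ρ)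
    (H : EuclideanSpace ℝ (Fin d) → EuclideanSpace ℝ (Fin d) →
      Matrix (Fin d) (Fin d) ℝ → ℝ)
    (Hcont : Continuous (fun z : EuclideanSpace ℝ (Fin d) × EuclideanSpace ℝ (Fin d) ×
      Matrix (Fin d) (Fin d) ℝ => H z.1 z.2.1 z.2.2))
    (Hmono : ∀ x p (Q Q' : Matrix (Fin d) (Fin d) ℝ),
      (Q' - Q).PosSemidef → H x p Q' ≤ H x p Q)
    (HA1 : AssumptionA1 d 𝒪 H)
    (w₁ w₂ : ℝ → EuclideanSpace ℝ (Fin d) → ℝ)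
    (hw₁usc : UpperSemicontinuousOn (fun z : ℝ × EuclideanSpace ℝ (Fin d) => w₁ z.1 z.2)
      (Icc 0 T ×ˢ closure 𝒪))
    (hw₂lsc : LowerSemicontinuousOn (fun z : ℝ × EuclideanSpace ℝ (Fin d) => w₂ z.1 z.2)
      (Icc 0 T ×ˢ closure 𝒪))
    -- `w₁` is a viscosity subsolution on `cl(𝒪)` of `ρφ − ∂_t φ + 𝓗(·,Dφ,D²φ) = 0`
    (hsub : ∀ (φ φt : ℝ → EuclideanSpace ℝ (Fin d) → ℝ)
      (Dφ : ℝ → EuclideanSpace ℝ (Fin d) → EuclideanSpace ℝ (Fin d))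
      (D2φ : ℝ → EuclideanSpace ℝ (Fin d) → Matrix (Fin d) (Fin d) ℝ),
      IsC12 d φ φt Dφ D2φ →
      ∀ t₀ ∈ Ico (0 : ℝ) T, ∀ x₀ ∈ closure 𝒪,
        IsLocalMaxOn (fun z : ℝ × EuclideanSpace ℝ (Fin d) => w₁ z.1 z.2 - φ z.1 z.2)
          (Icc 0 T ×ˢ closure 𝒪) (t₀, x₀) →
        ρ * w₁ t₀ x₀ - φt t₀ x₀ + H x₀ (Dφ t₀ x₀) (D2φ t₀ x₀) ≤ 0)
    -- `w₂` is a viscosity supersolution on `𝒪` of the same equation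
    (hsuper : ∀ (φ φt : ℝ → EuclideanSpace ℝ (Fin d) → ℝ)
      (Dφ : ℝ → EuclideanSpace ℝ (Fin d) → EuclideanSpace ℝ (Fin d))
      (D2φ : ℝ → EuclideanSpace ℝ (Fin d) → Matrix (Fin d) (Fin d) ℝ),
      IsC12 d φ φt Dφ D2φ →
      ∀ t₀ ∈ Ico (0 : ℝ) T, ∀ x₀ ∈ 𝒪,
        IsLocalMinOn (fun z : ℝ × EuclideanSpace ℝ (Fin d) => w₂ z.1 z.2 - φ z.1 z.2)
          (Icc 0 T ×ˢ 𝒪) (t₀, x₀) →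
        0 ≤ ρ * w₂ t₀ x₀ - φt t₀ x₀ + H x₀ (Dφ t₀ x₀) (D2φ t₀ x₀))
    -- polynomial growth
    (hw₁growth : ∃ (C : ℝ) (p : ℕ), ∀ t ∈ Icc 0 T, ∀ x ∈ closure 𝒪,
      |w₁ t x| ≤ C * (1 + ‖x‖ ^ p))
    (hw₂growth : ∃ (C : ℝ) (p : ℕ), ∀ t ∈ Icc 0 T, ∀ x ∈ closure 𝒪,
      |w₂ t x| ≤ C * (1 + ‖x‖ ^ p))
    -- `w₂` is of class `𝓡(𝒪)`
    (hw₂R : ClassR d T 𝒪 w₂)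
    -- comparison at the terminal time
    (hterm : ∀ x ∈ closure 𝒪, w₁ T x ≤ w₂ T x) :
    ∀ t ∈ Icc 0 T, ∀ x ∈ closure 𝒪, w₁ t x ≤ w₂ t x := by
  obtain ⟨α, hα, HA⟩ := HA1
  obtain ⟨C₁, p₁, hg₁⟩ := hw₁growth
  obtain ⟨C₂, p₂, hg₂⟩ := hw₂growth
  intro t ht x hx
  by_contra hbad
  push Not at hbad
  refine final_contra hρ Hcont h𝒪 hα HA hsub hsuper hw₁usc hw₂lsc hw₂R hterm
    (M := 2 * |C₁| + 2 * |C₂|) (m := p₁ + p₂) ?_ ht hx hbad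
  intro s hs y hy
  have h1 := (le_abs_self _).trans ((hg₁ s hs y hy).trans
    (growth_bound C₁ p₁ (p₁ + p₂) (Nat.le_add_right _ _) y))
  have h2 := (neg_le_abs _).trans ((hg₂ s hs y hy).trans
    (growth_bound C₂ p₂ (p₁ + p₂) (Nat.le_add_left _ _) y))
  linarith

end
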